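/- arXiv:1502.06143 — 2 statements merged into one kernel-verified Lean document; each statement's English description precedes it below -/
import Mathlib

section
/- Let μ_1, μ_2 be Borel probability measures on R^{2d} and μ ∈ Π(μ_1, μ_2) a coupling. Then the Töplitz operator OP_ε^T((2πε)^{2d} μ) on L^2(R^d) ⊗ L^2(R^d) is a density operator whose two partial traces are the Töplitz operators OP_ε^T((2πε)^d μ_1) and OP_ε^T((2πε)^d μ_2) respectively. -/
open MeasureTheory
open scoped ComplexConjugate RealInnerProductSpace

noncomputable section

/-- The coherent state `|z,ε⟩` at scale `ε` with `z = q + ip ∈ ℂ^d`: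
`|z,ε⟩(x) = (πε)^{−d/4} e^{−(x−q)²/2ε} e^{ip·x/ε}`. -/
def coh (d : ℕ) (ε : ℝ) (q p x : EuclideanSpace ℝ (Fin d)) : ℂ :=
  (((Real.pi * ε) ^ (-(d : ℝ) / 4) : ℝ) : ℂ) *
    Complex.exp ((-(‖x - q‖ ^ 2) / (2 * ε) : ℝ) + Complex.I * ((⟪p, x⟫ / ε : ℝ) : ℂ))

/-- The kernel of the Töplitz operator `OP_ε^T((2πε)^{2d} μ)` on
`L²(ℝ^d) ⊗ L²(ℝ^d)` for a measure `μ` on phase-space pairs. -/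
def toeplitzKernel2 (d : ℕ) (ε : ℝ)
    (μ : Measure ((EuclideanSpace ℝ (Fin d) × EuclideanSpace ℝ (Fin d)) ×
                  (EuclideanSpace ℝ (Fin d) × EuclideanSpace ℝ (Fin d))))
    (X Y : EuclideanSpace ℝ (Fin d) × EuclideanSpace ℝ (Fin d)) : ℂ :=
  ∫ z, coh d ε z.1.1 z.1.2 X.1 * coh d ε z.2.1 z.2.2 X.2 *
        conj (coh d ε z.1.1 z.1.2 Y.1) * conj (coh d ε z.2.1 z.2.2 Y.2) ∂μ

/-- The kernel of the Töplitz operator `OP_ε^T((2πε)^d ν)` on `L²(ℝ^d)`. -/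
def toeplitzKernel1 (d : ℕ) (ε : ℝ)
    (ν : Measure (EuclideanSpace ℝ (Fin d) × EuclideanSpace ℝ (Fin d)))
    (x y : EuclideanSpace ℝ (Fin d)) : ℂ :=
  ∫ z, coh d ε z.1 z.2 x * conj (coh d ε z.1 z.2 y) ∂ν

/-!
`OP_ε^T((2πε)^{2d} μ)` is the `μ`-average of the rank-one projectors on the tensor coherent states
`|z₁,ε⟩ ⊗ |z₂,ε⟩`. Any average of rank-one projectors is hermitian, and its quadratic form at `φ`
is the average of `|⟨ψ_z|φ⟩|² ≥ 0`. By Fubini, tracing out a normalized tensor factor replaces the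
squared modulus of that factor by `1`: tracing out everything leaves the mass of `μ`, and tracing
out one coherent state leaves the average of the projectors on the other one, which depends on `μ`
only through a marginal.
-/

section Mixture

variable {Z W V : Type*} [MeasurableSpace Z]

/-- The integral kernel of the mixture `∫ |ψ_z⟩⟨ψ_z| μ(dz)` of the pure states `ψ_z`; both Töplitz
kernels are of this form. -/
def mixtureKernel (μ : Measure Z) (ψ : Z → W → ℂ) (X Y : W) : ℂ :=
  ∫ z, ψ z X * conj (ψ z Y) ∂μ

/-- The amplitude `⟨ψ_z|φ⟩ = ∫ conj(ψ_z) φ dν`, as a function of `z`. -/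
def amplitude {Z W : Type*} [MeasurableSpace W] (ν : Measure W) (ψ : Z → W → ℂ) (φ : W → ℂ)
    (z : Z) : ℂ :=
  ∫ X, conj (ψ z X) * φ X ∂ν

lemma conj_mixtureKernel (μ : Measure Z) (ψ : Z → W → ℂ) (X Y : W) :
    conj (mixtureKernel μ ψ X Y) = mixtureKernel μ ψ Y X := by
  simp only [mixtureKernel, ← integral_conj, map_mul, Complex.conj_conj, mul_comm]

lemma mixtureKernel_map {Z' : Type*} [MeasurableSpace Z'] {μ : Measure Z} {f : Z → Z'}
    (hf : AEMeasurable f μ) {ψ : Z' → W → ℂ}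
    (hψ : ∀ X, AEStronglyMeasurable (ψ · X) (μ.map f)) (X Y : W) :
    mixtureKernel (μ.map f) ψ X Y = mixtureKernel μ (fun z => ψ (f z)) X Y :=
  integral_map hf ((hψ X).mul (Complex.continuous_conj.comp_aestronglyMeasurable (hψ Y)))

section Trace

variable [MeasurableSpace W] {μ : Measure Z} {ν : Measure W}

lemma integral_mul_conj_eq_one {ψ : W → ℂ} (hψ : ∫ w, ‖ψ w‖ ^ 2 ∂ν = 1) :
    ∫ w, ψ w * conj (ψ w) ∂ν = 1 := by
  simp only [Complex.mul_conj', ← Complex.ofReal_pow, integral_complex_ofReal, hψ,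
    Complex.ofReal_one]

variable [SFinite ν]

lemma integrable_mul_mul_conj_prod {a : Z → ℂ} (ha : Integrable a μ) {ψ : Z → W → ℂ}
    (hψ : AEStronglyMeasurable (Function.uncurry ψ) (μ.prod ν))
    (hψ_one : ∀ z, ∫ w, ‖ψ z w‖ ^ 2 ∂ν = 1) :
    Integrable (fun u : Z × W => a u.1 * (ψ u.1 u.2 * conj (ψ u.1 u.2))) (μ.prod ν) := by
  have hint (z : Z) : Integrable (fun w => ψ z w * conj (ψ z w)) ν :=
    .of_integral_ne_zero (by simp [integral_mul_conj_eq_one (hψ_one z)])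
  have hnorm (z : Z) : ∫ w, ‖a z * (ψ z w * conj (ψ z w))‖ ∂ν = ‖a z‖ := by
    simp only [norm_mul, RCLike.norm_conj, ← sq, integral_const_mul, hψ_one, mul_one]
  have hmeas := ha.1.comp_fst.mul
    (hψ.mul (Complex.continuous_conj.comp_aestronglyMeasurable hψ))
  refine (integrable_prod_iff hmeas).2 ⟨.of_forall fun z => (hint z).const_mul (a z), ?_⟩
  exact ha.norm.congr (.of_forall fun z => (hnorm z).symm)

lemma integral_integral_mul_mul_conj [SFinite μ] {a : Z → ℂ} (ha : Integrable a μ)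
    {ψ : Z → W → ℂ} (hψ : AEStronglyMeasurable (Function.uncurry ψ) (μ.prod ν))
    (hψ_one : ∀ z, ∫ w, ‖ψ z w‖ ^ 2 ∂ν = 1) :
    ∫ w, ∫ z, a z * (ψ z w * conj (ψ z w)) ∂μ ∂ν = ∫ z, a z ∂μ := by
  rw [← integral_integral_swap (integrable_mul_mul_conj_prod ha hψ hψ_one)]
  simp only [integral_const_mul, integral_mul_conj_eq_one (hψ_one _), mul_one]

theorem integral_mixtureKernel_diag [IsFiniteMeasure μ] {ψ : Z → W → ℂ}
    (hψ : AEStronglyMeasurable (Function.uncurry ψ) (μ.prod ν))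
    (hψ_one : ∀ z, ∫ w, ‖ψ z w‖ ^ 2 ∂ν = 1) :
    ∫ X, mixtureKernel μ ψ X X ∂ν = μ.real Set.univ := by
  simpa [mixtureKernel] using integral_integral_mul_mul_conj (integrable_const (1 : ℂ)) hψ hψ_one

theorem integral_mixtureKernel_tensor_snd [SFinite μ] {φ : Z → V → ℂ} {χ : Z → W → ℂ} (x y : V)
    (hφ : Integrable (fun z => φ z x * conj (φ z y)) μ)
    (hχ : AEStronglyMeasurable (Function.uncurry χ) (μ.prod ν))
    (hχ_one : ∀ z, ∫ w, ‖χ z w‖ ^ 2 ∂ν = 1) :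
    ∫ w, mixtureKernel μ (fun z (X : V × W) => φ z X.1 * χ z X.2) (x, w) (y, w) ∂ν =
      mixtureKernel μ φ x y := by
  simpa only [mixtureKernel, map_mul, mul_mul_mul_comm] using
    integral_integral_mul_mul_conj hφ hχ hχ_one

theorem integral_mixtureKernel_tensor_fst [SFinite μ] {φ : Z → V → ℂ} {χ : Z → W → ℂ} (x y : V)
    (hφ : Integrable (fun z => φ z x * conj (φ z y)) μ)
    (hχ : AEStronglyMeasurable (Function.uncurry χ) (μ.prod ν))
    (hχ_one : ∀ z, ∫ w, ‖χ z w‖ ^ 2 ∂ν = 1) :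
    ∫ w, mixtureKernel μ (fun z (X : W × V) => χ z X.1 * φ z X.2) (w, x) (w, y) ∂ν =
      mixtureKernel μ φ x y := by
  simpa only [mixtureKernel, mul_comm (χ _ _)] using
    integral_mixtureKernel_tensor_snd x y hφ hχ hχ_one

end Trace

section Positivity

variable [MeasurableSpace W] {μ : Measure Z} {ν : Measure W} {ψ : Z → W → ℂ} {C : ℝ} {φ : W → ℂ}

lemma integrable_mul_conj_mul_prod {a : Z → ℂ} (ha : Integrable a μ)
    (hψ : AEStronglyMeasurable (Function.uncurry ψ) (μ.prod ν)) (hψC : ∀ z X, ‖ψ z X‖ ≤ C)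
    (hφ : Integrable φ ν) :
    Integrable (fun u : Z × W => a u.1 * (conj (ψ u.1 u.2) * φ u.2)) (μ.prod ν) := by
  simpa only [mul_left_comm, Function.uncurry] using (ha.mul_prod hφ).bdd_mul
    (Complex.continuous_conj.comp_aestronglyMeasurable hψ)
    (.of_forall fun u => (RCLike.norm_conj _).trans_le (hψC u.1 u.2))

variable [SFinite ν]

lemma integrable_amplitude [IsFiniteMeasure μ]
    (hψ : AEStronglyMeasurable (Function.uncurry ψ) (μ.prod ν)) (hψC : ∀ z X, ‖ψ z X‖ ≤ C)
    (hφ : Integrable φ ν) : Integrable (amplitude ν ψ φ) μ := by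
  simpa only [one_mul] using!
    (integrable_mul_conj_mul_prod (integrable_const 1) hψ hψC hφ).integral_prod_left

lemma integral_integral_mul_conj_mul [SFinite μ] {a : Z → ℂ} (ha : Integrable a μ)
    (hψ : AEStronglyMeasurable (Function.uncurry ψ) (μ.prod ν)) (hψC : ∀ z X, ‖ψ z X‖ ≤ C)
    (hφ : Integrable φ ν) :
    ∫ X, (∫ z, a z * conj (ψ z X) ∂μ) * φ X ∂ν = ∫ z, a z * amplitude ν ψ φ z ∂μ := by
  simp only [← integral_mul_const, mul_assoc]
  rw [← integral_integral_swap (integrable_mul_conj_mul_prod ha hψ hψC hφ)]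
  simp only [integral_const_mul, amplitude]

theorem integral_conj_mul_mixtureKernel_mul [IsFiniteMeasure μ]
    (hψ : StronglyMeasurable (Function.uncurry ψ)) (hψC : ∀ z X, ‖ψ z X‖ ≤ C)
    (hφ : Integrable φ ν) :
    ∫ X, ∫ Y, conj (φ X) * mixtureKernel μ ψ X Y * φ Y ∂ν ∂ν =
      ((∫ z, ‖amplitude ν ψ φ z‖ ^ 2 ∂μ : ℝ) : ℂ) := by
  set S := amplitude ν ψ φ
  have hψX (X : W) : Integrable (ψ · X) μ :=
    .of_bound (hψ.comp_measurable measurable_prodMk_right).aestronglyMeasurable C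
      (.of_forall (hψC · X))
  have hS : Integrable (fun z => conj (S z)) μ :=
    Complex.conjCLE.toContinuousLinearMap.integrable_comp
      (integrable_amplitude hψ.aestronglyMeasurable hψC hφ)
  calc ∫ X, ∫ Y, conj (φ X) * mixtureKernel μ ψ X Y * φ Y ∂ν ∂ν
      = ∫ X, conj (φ X) * ∫ z, ψ z X * S z ∂μ ∂ν := by
        simp only [mul_assoc, integral_const_mul, mixtureKernel, S,
          integral_integral_mul_conj_mul (hψX _) hψ.aestronglyMeasurable hψC hφ]
    _ = conj (∫ X, (∫ z, conj (S z) * conj (ψ z X) ∂μ) * φ X ∂ν) := by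
        simp only [← integral_conj, map_mul, Complex.conj_conj, mul_comm]
    _ = conj (∫ z, conj (S z) * S z ∂μ) := by
        rw [integral_integral_mul_conj_mul hS hψ.aestronglyMeasurable hψC hφ]
    _ = ((∫ z, ‖S z‖ ^ 2 ∂μ : ℝ) : ℂ) := by
        simp only [Complex.conj_mul', ← Complex.ofReal_pow, integral_complex_ofReal,
          Complex.conj_ofReal]

end Positivity

end Mixture

section CoherentState

variable {d : ℕ} {ε : ℝ}

@[fun_prop]
lemma continuous_coh {T : Type*} [TopologicalSpace T] {q p x : T → EuclideanSpace ℝ (Fin d)}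
    (hq : Continuous q) (hp : Continuous p) (hx : Continuous x) :
    Continuous fun t => coh d ε (q t) (p t) (x t) := by
  unfold coh
  fun_prop

lemma norm_coh (hε : 0 ≤ ε) (q p x : EuclideanSpace ℝ (Fin d)) :
    ‖coh d ε q p x‖ =
      (Real.pi * ε) ^ (-(d : ℝ) / 4) * Real.exp (-(‖x - q‖ ^ 2) / (2 * ε)) := by
  have hc : 0 ≤ (Real.pi * ε) ^ (-(d : ℝ) / 4) := by positivity
  simp [coh, Complex.norm_exp, abs_of_nonneg hc, -Complex.ofReal_div, -Complex.ofReal_neg]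

lemma norm_coh_le (hε : 0 ≤ ε) (q p x : EuclideanSpace ℝ (Fin d)) :
    ‖coh d ε q p x‖ ≤ (Real.pi * ε) ^ (-(d : ℝ) / 4) := by
  rw [norm_coh hε]
  refine mul_le_of_le_one_right (by positivity) (Real.exp_le_one_iff.2 ?_)
  exact div_nonpos_of_nonpos_of_nonneg (neg_nonpos.2 (sq_nonneg _)) (by positivity)

lemma norm_coh_sq (hε : 0 ≤ ε) (q p x : EuclideanSpace ℝ (Fin d)) :
    ‖coh d ε q p x‖ ^ 2 =
      (Real.pi * ε) ^ (-(d : ℝ) / 2) * Real.exp (-ε⁻¹ * ‖x - q‖ ^ 2) := by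
  rw [norm_coh hε, mul_pow, ← Real.exp_nat_mul, ← Real.rpow_mul_natCast (by positivity)]
  congr 2 <;> push_cast <;> ring

lemma integral_norm_coh_sq (hε : 0 < ε) (q p : EuclideanSpace ℝ (Fin d)) :
    ∫ x, ‖coh d ε q p x‖ ^ 2 = 1 := by
  have gaussian : ∫ x : EuclideanSpace ℝ (Fin d), Real.exp (-ε⁻¹ * ‖x - q‖ ^ 2) =
      (Real.pi * ε) ^ ((d : ℝ) / 2) := by
    rw [integral_sub_right_eq_self (fun x => Real.exp (-ε⁻¹ * ‖x‖ ^ 2)) q,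
      GaussianFourier.integral_rexp_neg_mul_sq_norm (inv_pos.2 hε), div_inv_eq_mul,
      finrank_euclideanSpace_fin]
  simp only [norm_coh_sq hε.le, integral_const_mul]
  rw [gaussian, ← Real.rpow_add (by positivity), neg_div, neg_add_cancel, Real.rpow_zero]

lemma integrable_coh_mul_conj_coh {Z : Type*} [MeasurableSpace Z] {μ : Measure Z}
    [IsFiniteMeasure μ] (hε : 0 ≤ ε)
    {f : Z → EuclideanSpace ℝ (Fin d) × EuclideanSpace ℝ (Fin d)} (hf : AEMeasurable f μ)
    (x y : EuclideanSpace ℝ (Fin d)) :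
    Integrable (fun z => coh d ε (f z).1 (f z).2 x * conj (coh d ε (f z).1 (f z).2 y)) μ := by
  have hcont : Continuous fun z : EuclideanSpace ℝ (Fin d) × EuclideanSpace ℝ (Fin d) =>
      coh d ε z.1 z.2 x * conj (coh d ε z.1 z.2 y) := by
    fun_prop
  refine .of_bound (hcont.measurable.comp_aemeasurable hf).aestronglyMeasurable
    ((Real.pi * ε) ^ (-(d : ℝ) / 4) * (Real.pi * ε) ^ (-(d : ℝ) / 4)) (.of_forall fun z => ?_)
  simp only [norm_mul, RCLike.norm_conj]
  gcongr <;> exact norm_coh_le hε _ _ _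

/-- The tensor coherent state `|(z₁,z₂),ε⟩ = |z₁,ε⟩ ⊗ |z₂,ε⟩`, with `z_j = q_j + ip_j` encoded as
the pair `(q_j, p_j)`. -/
def tensorCoh (d : ℕ) (ε : ℝ)
    (z : (EuclideanSpace ℝ (Fin d) × EuclideanSpace ℝ (Fin d)) ×
      (EuclideanSpace ℝ (Fin d) × EuclideanSpace ℝ (Fin d)))
    (X : EuclideanSpace ℝ (Fin d) × EuclideanSpace ℝ (Fin d)) : ℂ :=
  coh d ε z.1.1 z.1.2 X.1 * coh d ε z.2.1 z.2.2 X.2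

lemma stronglyMeasurable_tensorCoh : StronglyMeasurable (Function.uncurry (tensorCoh d ε)) := by
  have : Continuous (Function.uncurry (tensorCoh d ε)) := by
    unfold tensorCoh Function.uncurry
    fun_prop
  exact this.stronglyMeasurable

lemma norm_tensorCoh_le (hε : 0 ≤ ε)
    (z : (EuclideanSpace ℝ (Fin d) × EuclideanSpace ℝ (Fin d)) ×
      (EuclideanSpace ℝ (Fin d) × EuclideanSpace ℝ (Fin d)))
    (X : EuclideanSpace ℝ (Fin d) × EuclideanSpace ℝ (Fin d)) :
    ‖tensorCoh d ε z X‖ ≤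
      (Real.pi * ε) ^ (-(d : ℝ) / 4) * (Real.pi * ε) ^ (-(d : ℝ) / 4) := by
  rw [tensorCoh, norm_mul]
  gcongr <;> exact norm_coh_le hε _ _ _

lemma integral_norm_tensorCoh_sq (hε : 0 < ε)
    (z : (EuclideanSpace ℝ (Fin d) × EuclideanSpace ℝ (Fin d)) ×
      (EuclideanSpace ℝ (Fin d) × EuclideanSpace ℝ (Fin d))) :
    ∫ X, ‖tensorCoh d ε z X‖ ^ 2 = 1 := by
  simp only [tensorCoh, norm_mul, mul_pow]
  rw [Measure.volume_eq_prod, integral_prod_mul (fun x => ‖coh d ε z.1.1 z.1.2 x‖ ^ 2)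
    (fun x => ‖coh d ε z.2.1 z.2.2 x‖ ^ 2), integral_norm_coh_sq hε, integral_norm_coh_sq hε,
    one_mul]

end CoherentState

section Toeplitz

variable {d : ℕ} {ε : ℝ}

lemma toeplitzKernel2_eq_mixtureKernel
    (μ : Measure ((EuclideanSpace ℝ (Fin d) × EuclideanSpace ℝ (Fin d)) ×
      (EuclideanSpace ℝ (Fin d) × EuclideanSpace ℝ (Fin d)))) :
    toeplitzKernel2 d ε μ = mixtureKernel μ (tensorCoh d ε) := by
  funext X Y
  simp only [toeplitzKernel2, mixtureKernel, tensorCoh, map_mul, mul_assoc]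

lemma toeplitzKernel1_map {Z : Type*} [MeasurableSpace Z] {μ : Measure Z}
    {f : Z → EuclideanSpace ℝ (Fin d) × EuclideanSpace ℝ (Fin d)} (hf : AEMeasurable f μ)
    (x y : EuclideanSpace ℝ (Fin d)) :
    toeplitzKernel1 d ε (μ.map f) x y =
      mixtureKernel μ (fun z => coh d ε (f z).1 (f z).2) x y := by
  have hcoh (x : EuclideanSpace ℝ (Fin d)) : Continuous
      fun z : EuclideanSpace ℝ (Fin d) × EuclideanSpace ℝ (Fin d) => coh d ε z.1 z.2 x := by
    fun_prop
  exact mixtureKernel_map hf (fun x => (hcoh x).aestronglyMeasurable) x y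

variable {μ : Measure ((EuclideanSpace ℝ (Fin d) × EuclideanSpace ℝ (Fin d)) ×
  (EuclideanSpace ℝ (Fin d) × EuclideanSpace ℝ (Fin d)))} [IsFiniteMeasure μ]

theorem integral_toeplitzKernel2_snd (hε : 0 < ε) (x y : EuclideanSpace ℝ (Fin d)) :
    ∫ w, toeplitzKernel2 d ε μ (x, w) (y, w) = toeplitzKernel1 d ε (μ.map Prod.fst) x y := by
  rw [toeplitzKernel2_eq_mixtureKernel, toeplitzKernel1_map measurable_fst.aemeasurable]
  refine integral_mixtureKernel_tensor_snd (μ := μ) (φ := fun z => coh d ε z.1.1 z.1.2)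
    (χ := fun z => coh d ε z.2.1 z.2.2) x y ?_ ?_ fun z => integral_norm_coh_sq hε _ _
  · exact integrable_coh_mul_conj_coh hε.le measurable_fst.aemeasurable x y
  · exact (continuous_coh (by fun_prop) (by fun_prop) (by fun_prop)).aestronglyMeasurable

theorem integral_toeplitzKernel2_fst (hε : 0 < ε) (x y : EuclideanSpace ℝ (Fin d)) :
    ∫ w, toeplitzKernel2 d ε μ (w, x) (w, y) = toeplitzKernel1 d ε (μ.map Prod.snd) x y := by
  rw [toeplitzKernel2_eq_mixtureKernel, toeplitzKernel1_map measurable_snd.aemeasurable]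
  refine integral_mixtureKernel_tensor_fst (μ := μ) (φ := fun z => coh d ε z.2.1 z.2.2)
    (χ := fun z => coh d ε z.1.1 z.1.2) x y ?_ ?_ fun z => integral_norm_coh_sq hε _ _
  · exact integrable_coh_mul_conj_coh hε.le measurable_snd.aemeasurable x y
  · exact (continuous_coh (by fun_prop) (by fun_prop) (by fun_prop)).aestronglyMeasurable

end Toeplitz

theorem toeplitz_quantization_of_coupling_general (d : ℕ) (ε : ℝ) (hε : 0 < ε)
    (μ : Measure ((EuclideanSpace ℝ (Fin d) × EuclideanSpace ℝ (Fin d)) ×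
      (EuclideanSpace ℝ (Fin d) × EuclideanSpace ℝ (Fin d)))) [IsFiniteMeasure μ] :
    (∀ X Y, toeplitzKernel2 d ε μ Y X = conj (toeplitzKernel2 d ε μ X Y)) ∧
    ∫ X, toeplitzKernel2 d ε μ X X = μ.real Set.univ ∧
    (∀ φ : EuclideanSpace ℝ (Fin d) × EuclideanSpace ℝ (Fin d) → ℂ, Integrable φ →
      0 ≤ (∫ X, ∫ Y, conj (φ X) * toeplitzKernel2 d ε μ X Y * φ Y).re) ∧
    (∀ x y, ∫ w, toeplitzKernel2 d ε μ (x, w) (y, w) =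
      toeplitzKernel1 d ε (μ.map Prod.fst) x y) ∧
    (∀ x y, ∫ w, toeplitzKernel2 d ε μ (w, x) (w, y) =
      toeplitzKernel1 d ε (μ.map Prod.snd) x y) := by
  refine ⟨?_, ?_, fun φ hφ => ?_, integral_toeplitzKernel2_snd hε,
    integral_toeplitzKernel2_fst hε⟩ <;> rw [toeplitzKernel2_eq_mixtureKernel]
  · exact fun X Y => (conj_mixtureKernel μ _ X Y).symm
  · exact integral_mixtureKernel_diag stronglyMeasurable_tensorCoh.aestronglyMeasurable
      (integral_norm_tensorCoh_sq hε)
  · rw [integral_conj_mul_mixtureKernel_mul stronglyMeasurable_tensorCoh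
      (norm_tensorCoh_le hε.le) hφ, Complex.ofReal_re]
    positivity

/-- Construction of quantum couplings (Lemma 4.1): if `μ ∈ Π(μ₁, μ₂)` is a
coupling of two probability measures on phase space `ℝ^{2d}`, then the Töplitz
operator `OP_ε^T((2πε)^{2d} μ)` is a density operator on `L²(ℝ^d) ⊗ L²(ℝ^d)`
(hermitian, positive, trace one) whose partial traces are the Töplitz operators
`OP_ε^T((2πε)^d μ₁)` and `OP_ε^T((2πε)^d μ₂)`. -/
theorem toeplitz_quantization_of_coupling (d : ℕ) (ε : ℝ) (hε : 0 < ε)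
    (μ1 μ2 : Measure (EuclideanSpace ℝ (Fin d) × EuclideanSpace ℝ (Fin d)))
    [IsProbabilityMeasure μ1] [IsProbabilityMeasure μ2]
    (μ : Measure ((EuclideanSpace ℝ (Fin d) × EuclideanSpace ℝ (Fin d)) ×
                  (EuclideanSpace ℝ (Fin d) × EuclideanSpace ℝ (Fin d))))
    [IsProbabilityMeasure μ]
    (hμ1 : Measure.map Prod.fst μ = μ1) (hμ2 : Measure.map Prod.snd μ = μ2) :
    -- hermitian
    (∀ X Y, toeplitzKernel2 d ε μ Y X = conj (toeplitzKernel2 d ε μ X Y)) ∧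
    -- trace one
    (∫ X : EuclideanSpace ℝ (Fin d) × EuclideanSpace ℝ (Fin d),
        toeplitzKernel2 d ε μ X X = 1) ∧
    -- positivity
    (∀ φ : EuclideanSpace ℝ (Fin d) × EuclideanSpace ℝ (Fin d) → ℂ,
        Continuous φ → HasCompactSupport φ →
        0 ≤ (∫ X : EuclideanSpace ℝ (Fin d) × EuclideanSpace ℝ (Fin d),
              ∫ Y : EuclideanSpace ℝ (Fin d) × EuclideanSpace ℝ (Fin d),
                conj (φ X) * toeplitzKernel2 d ε μ X Y * φ Y).re) ∧
    -- first partial trace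
    (∀ x y, ∫ w, toeplitzKernel2 d ε μ (x, w) (y, w) = toeplitzKernel1 d ε μ1 x y) ∧
    -- second partial trace
    (∀ x y, ∫ w, toeplitzKernel2 d ε μ (w, x) (w, y) = toeplitzKernel1 d ε μ2 x y) := by
  subst hμ1 hμ2
  obtain ⟨hermitian, trace, positive, ptrace_snd, ptrace_fst⟩ :=
    toeplitz_quantization_of_coupling_general d ε hε μ
  exact ⟨hermitian, by simpa using trace,
    fun φ hφ hφc => positive φ (hφ.integrable_of_hasCompactSupport hφc), ptrace_snd, ptrace_fst⟩

end
end

section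
/- Let ρ_1^ε, ρ_2^ε be density operators on L^2(R^d) with Husimi transforms W̃_ε[ρ_1^ε], W̃_ε[ρ_2^ε]. Then MK_2^ε(ρ_1^ε, ρ_2^ε)^2 ≥ dist_{MK,2}(W̃_ε[ρ_1^ε], W̃_ε[ρ_2^ε])^2 − 2dε. -/
open MeasureTheory
open scoped ComplexConjugate RealInnerProductSpace ENNReal

noncomputable section

/-- Kernel `Σ λ_n φ_n(x) conj(φ_n(y))` of a density operator on `L²(ℝ^d)`. -/
def densKernel (d : ℕ) (lam : ℕ → ℝ) (φ : ℕ → EuclideanSpace ℝ (Fin d) → ℂ)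
    (x y : EuclideanSpace ℝ (Fin d)) : ℂ :=
  ∑' n, (lam n : ℂ) * φ n x * conj (φ n y)

/-- Kernel of a density operator on `L²(ℝ^d × ℝ^d)` given by a decomposition. -/
def kerOf (d : ℕ) (lam : ℕ → ℝ)
    (ψ : ℕ → EuclideanSpace ℝ (Fin d) × EuclideanSpace ℝ (Fin d) → ℂ)
    (X Y : EuclideanSpace ℝ (Fin d) × EuclideanSpace ℝ (Fin d)) : ℂ :=
  ∑' n, (lam n : ℂ) * ψ n X * conj (ψ n Y)

/-- The Husimi transform at scale `ε` of the density operator with spectral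
decomposition `(λ, φ)`: `W̃_ε[ρ](q,p) = (2πε)^{−d} Σ λ_n |⟨(q,p),ε | φ_n⟩|²`. -/
def husimi (d : ℕ) (ε : ℝ) (lam : ℕ → ℝ)
    (φ : ℕ → EuclideanSpace ℝ (Fin d) → ℂ)
    (z : EuclideanSpace ℝ (Fin d) × EuclideanSpace ℝ (Fin d)) : ℝ :=
  (2 * Real.pi * ε) ^ (-(d : ℝ)) *
    ∑' n, lam n * Complex.normSq (∫ x, conj (coh d ε z.1 z.2 x) * φ n x)

/-- The `i`-th component of `Q` (multiplication by `x₁ i − x₂ i`). -/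
def Qop (d : ℕ) (i : Fin d)
    (f : EuclideanSpace ℝ (Fin d) × EuclideanSpace ℝ (Fin d) → ℂ) :
    EuclideanSpace ℝ (Fin d) × EuclideanSpace ℝ (Fin d) → ℂ :=
  fun x => ((x.1 i - x.2 i : ℝ) : ℂ) * f x

/-- The `i`-th component of `P = −iε(∇_{x₁} − ∇_{x₂})`. -/
def Pop (d : ℕ) (ε : ℝ) (i : Fin d)
    (f : EuclideanSpace ℝ (Fin d) × EuclideanSpace ℝ (Fin d) → ℂ) :
    EuclideanSpace ℝ (Fin d) × EuclideanSpace ℝ (Fin d) → ℂ :=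
  fun x => (-Complex.I * (ε : ℂ)) *
    (fderiv ℝ f x (EuclideanSpace.single i 1, (0 : EuclideanSpace ℝ (Fin d)))
      - fderiv ℝ f x ((0 : EuclideanSpace ℝ (Fin d)), EuclideanSpace.single i 1))

/-- Quadratic form `ψ ↦ ⟨ψ, (Q*Q+P*P)ψ⟩`, valued in `ℝ≥0∞`. -/
def costForm (d : ℕ) (ε : ℝ)
    (ψ : EuclideanSpace ℝ (Fin d) × EuclideanSpace ℝ (Fin d) → ℂ) : ℝ≥0∞ :=
  ∑ i : Fin d,
    ((∫⁻ x, (‖Qop d i ψ x‖₊ : ℝ≥0∞) ^ 2) + ∫⁻ x, (‖Pop d ε i ψ x‖₊ : ℝ≥0∞) ^ 2)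

/-- `MK₂^ε(ρ₁,ρ₂)²`: infimum of `trace((Q*Q+P*P)R)` over quantum couplings `R`
of `ρ₁, ρ₂`, the couplings being described by spectral decompositions with
partial-trace kernels `k₁, k₂`. -/
def MKsq (d : ℕ) (ε : ℝ)
    (k1 k2 : EuclideanSpace ℝ (Fin d) → EuclideanSpace ℝ (Fin d) → ℂ) : ℝ≥0∞ :=
  sInf { c : ℝ≥0∞ |
    ∃ (lam : ℕ → ℝ)
      (ψ : ℕ → EuclideanSpace ℝ (Fin d) × EuclideanSpace ℝ (Fin d) → ℂ),
      (∀ n, 0 ≤ lam n) ∧ (∑' n, lam n = 1) ∧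
      (∀ n, ContDiff ℝ 1 (ψ n)) ∧
      (∀ m n, ∫ X, conj (ψ m X) * ψ n X = if m = n then 1 else 0) ∧
      (∀ x y, ∫ w, kerOf d lam ψ (x, w) (y, w) = k1 x y) ∧
      (∀ x y, ∫ w, kerOf d lam ψ (w, x) (w, y) = k2 x y) ∧
      c = ∑' n, ENNReal.ofReal (lam n) * costForm d ε (ψ n) }

/-- Squared Wasserstein-2 distance between (nonnegative Borel) measures on
phase space `ℝ^{2d}`. -/
def W2sq (d : ℕ)
    (μ1 μ2 : Measure (EuclideanSpace ℝ (Fin d) × EuclideanSpace ℝ (Fin d))) : ℝ≥0∞ :=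
  sInf { c : ℝ≥0∞ |
    ∃ γ : Measure ((EuclideanSpace ℝ (Fin d) × EuclideanSpace ℝ (Fin d)) ×
                   (EuclideanSpace ℝ (Fin d) × EuclideanSpace ℝ (Fin d))),
      IsProbabilityMeasure γ ∧
      Measure.map Prod.fst γ = μ1 ∧ Measure.map Prod.snd γ = μ2 ∧
      c = ∫⁻ z, ENNReal.ofReal (‖z.1.1 - z.2.1‖ ^ 2 + ‖z.1.2 - z.2.2‖ ^ 2) ∂γ }

/-!
A quantum coupling `R` of `ρ₁` and `ρ₂` has a Husimi transform of its own, and this joint transform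
is the density of a classical coupling of the Husimi transforms of `ρ₁` and `ρ₂`: the coherent
states of the pair are products, so Plancherel's theorem in one factor turns integration over its
phase space into a partial trace. Averaging `|x₁ - x₂|² + |ξ₁ - ξ₂|²` against the joint transform
instead of evaluating `Q*Q + P*P` on `R` costs only the variance `ε / 2` of the coherent states per
unit direction of position or momentum, that is `ε / 2 * 2 = ε` for each of the `2d` differences
`x₁ i - x₂ i` and `ξ₁ i - ξ₂ i`.
-/

section SquareIntegrable

variable {α : Type*} [MeasurableSpace α] {μ : Measure α} {f g : α → ℂ}

theorem lintegral_enorm_sq_eq_eLpNorm_sq (f : α → ℂ) (μ : Measure α) :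
    ∫⁻ x, ‖f x‖ₑ ^ 2 ∂μ = eLpNorm f 2 μ ^ 2 := by
  simpa using (eLpNorm_nnreal_pow_eq_lintegral (f := f) (μ := μ) two_ne_zero).symm

theorem memLp_two_iff_lintegral_enorm_sq_ne_top (hf : AEStronglyMeasurable f μ) :
    MemLp f 2 μ ↔ ∫⁻ x, ‖f x‖ₑ ^ 2 ∂μ ≠ ⊤ := by
  simp [lintegral_enorm_sq_eq_eLpNorm_sq, MemLp, hf, lt_top_iff_ne_top]

theorem enorm_toLp_sq (hf : MemLp f 2 μ) : ‖hf.toLp f‖ₑ ^ 2 = ∫⁻ x, ‖f x‖ₑ ^ 2 ∂μ := by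
  rw [lintegral_enorm_sq_eq_eLpNorm_sq, Lp.enorm_toLp]

theorem sq_lintegral_mul_le {u v : α → ℝ≥0∞} (hu : AEMeasurable u μ) (hv : AEMeasurable v μ) :
    (∫⁻ x, u x * v x ∂μ) ^ 2 ≤ (∫⁻ x, u x ^ 2 ∂μ) * ∫⁻ x, v x ^ 2 ∂μ := by
  have holder := ENNReal.lintegral_mul_le_Lp_mul_Lq μ Real.HolderConjugate.two_two hu hv
  simp only [Pi.mul_apply, ENNReal.rpow_two] at holder
  calc (∫⁻ x, u x * v x ∂μ) ^ 2
      ≤ ((∫⁻ x, u x ^ 2 ∂μ) ^ (1 / 2 : ℝ) * (∫⁻ x, v x ^ 2 ∂μ) ^ (1 / 2 : ℝ)) ^ 2 := by gcongr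
    _ = (∫⁻ x, u x ^ 2 ∂μ) * ∫⁻ x, v x ^ 2 ∂μ := by
        simp only [mul_pow, ← ENNReal.rpow_mul_natCast]
        norm_num

theorem lintegral_enorm_mul_add_mul_sq (hf : MemLp f 2 μ) (hg : MemLp g 2 μ)
    (horth : ∫ x, conj (f x) * g x ∂μ = 0) (a b : ℂ) :
    ∫⁻ x, ‖f x * a + g x * b‖ₑ ^ 2 ∂μ =
      (∫⁻ x, ‖f x‖ₑ ^ 2 ∂μ) * ‖a‖ₑ ^ 2 + (∫⁻ x, ‖g x‖ₑ ^ 2 ∂μ) * ‖b‖ₑ ^ 2 := by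
  have hinner : inner ℂ (a • hf.toLp f) (b • hg.toLp g) = 0 := by
    rw [inner_smul_left, inner_smul_right, L2.inner_def,
      integral_congr_ae (g := fun x => conj (f x) * g x), horth, mul_zero, mul_zero]
    filter_upwards [hf.coeFn_toLp, hg.coeFn_toLp] with x hfx hgx
    rw [hfx, hgx, RCLike.inner_apply']
  have pythagoras := norm_add_sq_eq_norm_sq_add_norm_sq_of_inner_eq_zero _ _ hinner
  calc ∫⁻ x, ‖f x * a + g x * b‖ₑ ^ 2 ∂μ
      = ‖a • hf.toLp f + b • hg.toLp g‖ₑ ^ 2 := by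
        rw [← MemLp.toLp_const_smul, ← MemLp.toLp_const_smul, ← MemLp.toLp_add, enorm_toLp_sq]
        simp [mul_comm]
    _ = ‖a • hf.toLp f‖ₑ ^ 2 + ‖b • hg.toLp g‖ₑ ^ 2 := by
        simp only [← ofReal_norm, ← ENNReal.ofReal_pow (norm_nonneg _)]
        rw [← ENNReal.ofReal_add (by positivity) (by positivity)]
        simp only [sq, pythagoras]
    _ = (∫⁻ x, ‖f x‖ₑ ^ 2 ∂μ) * ‖a‖ₑ ^ 2 + (∫⁻ x, ‖g x‖ₑ ^ 2 ∂μ) * ‖b‖ₑ ^ 2 := by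
        simp only [enorm_smul, mul_pow, enorm_toLp_sq, mul_comm]

theorem lintegral_enorm_sq_eq_one_of_integral_conj_mul_self
    (hf : ∫ x, conj (f x) * f x ∂μ = 1) :
    ∫⁻ x, ‖f x‖ₑ ^ 2 ∂μ = 1 := by
  have hnorm (x : α) : conj (f x) * f x = ((‖f x‖ ^ 2 : ℝ) : ℂ) := by
    rw [Complex.conj_mul', Complex.ofReal_pow]
  simp only [hnorm, integral_complex_ofReal, Complex.ofReal_eq_one] at hf
  have hint : Integrable (fun x => ‖f x‖ ^ 2) μ :=
    Integrable.of_integral_ne_zero (hf.trans_ne one_ne_zero)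
  have hlintegral := ofReal_integral_eq_lintegral_ofReal hint (.of_forall fun x => sq_nonneg _)
  simpa only [hf, ENNReal.ofReal_one, ENNReal.ofReal_pow (norm_nonneg _), ofReal_norm] using
    hlintegral.symm

theorem tsum_mul_lintegral_enorm_sq_eq_one {lam : ℕ → ℝ} {f : ℕ → α → ℂ}
    (hlam : ∀ n, 0 ≤ lam n) (hsum : ∑' n, lam n = 1)
    (horth : ∀ m n, ∫ x, conj (f m x) * f n x ∂μ = if m = n then 1 else 0) :
    ∑' n, ENNReal.ofReal (lam n) * ∫⁻ x, ‖f n x‖ₑ ^ 2 ∂μ = 1 := by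
  have hnorm (n : ℕ) : ∫⁻ x, ‖f n x‖ₑ ^ 2 ∂μ = 1 :=
    lintegral_enorm_sq_eq_one_of_integral_conj_mul_self (by simp [horth])
  have hsummable : Summable lam := by
    by_contra h
    simp [tsum_eq_zero_of_not_summable h] at hsum
  simp only [hnorm, mul_one, ← ENNReal.ofReal_tsum_of_nonneg hlam hsummable, hsum,
    ENNReal.ofReal_one]

end SquareIntegrable

section Plancherel

open scoped FourierTransform Real

variable {V : Type*} [NormedAddCommGroup V] [InnerProductSpace ℝ V] [FiniteDimensional ℝ V]
  [MeasurableSpace V] [BorelSpace V] {f : V → ℂ}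

theorem coeFn_fourier_toLp_ae_eq (h1 : Integrable f) (h2 : MemLp f 2) :
    (𝓕 (h2.toLp f) : Lp (α := V) ℂ 2 volume) =ᵐ[volume] 𝓕 f := by
  have hcont : Continuous (𝓕 f) := VectorFourier.fourierIntegral_continuous
    Real.continuous_fourierChar (L := innerₗ V) continuous_inner h1
  refine ae_eq_of_integral_contDiff_smul_eq ((Lp.memLp _).locallyIntegrable (by norm_num))
    hcont.locallyIntegrable fun g hg hgs => ?_
  let G := (hgs.comp_left (g := Complex.ofReal) rfl).toSchwartzMap
    (Complex.ofRealCLM.contDiff.comp hg)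
  have hG : ∀ x, G x = (g x : ℂ) := fun _ => rfl
  have duality := congrArg (fun T => T G) (Lp.fourier_toTemperedDistribution_eq (h2.toLp f))
  simp only [TemperedDistribution.fourier_apply, Lp.toTemperedDistribution_apply] at duality
  have selfAdjoint := VectorFourier.integral_fourierIntegral_smul_eq_flip (μ := volume)
    (ν := volume) (L := innerₗ V) Real.continuous_fourierChar continuous_inner h1
    (G.integrable (μ := volume))
  rw [flip_innerₗ] at selfAdjoint
  calc ∫ x, g x • (𝓕 (h2.toLp f) : Lp (α := V) ℂ 2 volume) x
      = ∫ x, (𝓕 G) x • (h2.toLp f) x := by simpa [hG] using duality.symm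
    _ = ∫ x, f x • 𝓕 (G : V → ℂ) x := by
        refine integral_congr_ae ?_
        filter_upwards [h2.coeFn_toLp] with x hx
        rw [hx, SchwartzMap.fourier_coe, smul_eq_mul, smul_eq_mul, mul_comm]
    _ = ∫ x, 𝓕 f x • G x := selfAdjoint.symm
    _ = ∫ x, g x • 𝓕 f x := by simp [hG, mul_comm]

theorem lintegral_enorm_fourier_sq (h1 : Integrable f) (h2 : MemLp f 2) :
    ∫⁻ w, ‖𝓕 f w‖ₑ ^ 2 = ∫⁻ x, ‖f x‖ₑ ^ 2 := by
  have h : ‖𝓕 (h2.toLp f)‖ₑ = ‖h2.toLp f‖ₑ := by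
    simp only [← ofReal_norm, Lp.norm_fourier_eq]
  rw [← enorm_toLp_sq h2, ← h, Lp.enorm_def, lintegral_enorm_sq_eq_eLpNorm_sq,
    eLpNorm_congr_ae (coeFn_fourier_toLp_ae_eq h1 h2)]

theorem integrable_exp_inner_mul_I_smul (hf : Integrable f) (w : V) :
    Integrable fun x => Complex.exp (↑(-2 * π * ⟪x, w⟫) * Complex.I) • f x :=
  hf.bdd_mul (c := 1) (by fun_prop) (.of_forall fun x => (Complex.norm_exp_ofReal_mul_I _).le)

theorem lintegral_comp_inv_smul {c : ℝ} (hc : 0 < c) (F : V → ℝ≥0∞) :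
    ∫⁻ p, F (c⁻¹ • p) = ENNReal.ofReal (c ^ Module.finrank ℝ V) * ∫⁻ w, F w := by
  have hemb : MeasurableEmbedding fun p : V => c⁻¹ • p :=
    (Homeomorph.smulOfNeZero _ (inv_ne_zero hc.ne')).measurableEmbedding
  rw [← hemb.lintegral_map, Measure.map_addHaar_smul _ (inv_ne_zero hc.ne'),
    lintegral_smul_measure, inv_pow, inv_inv, abs_of_pos (pow_pos hc _), smul_eq_mul]

theorem lintegral_enorm_fourier_inv_smul_sq {c : ℝ} (hc : 0 < c) (h1 : Integrable f)
    (h2 : MemLp f 2) :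
    ENNReal.ofReal (c ^ (-(Module.finrank ℝ V : ℝ))) * ∫⁻ p, ‖𝓕 f (c⁻¹ • p)‖ₑ ^ 2 =
      ∫⁻ x, ‖f x‖ₑ ^ 2 := by
  rw [lintegral_comp_inv_smul hc fun w => ‖𝓕 f w‖ₑ ^ 2, lintegral_enorm_fourier_sq h1 h2,
    ← mul_assoc, ← ENNReal.ofReal_mul (by positivity), Real.rpow_neg hc.le, Real.rpow_natCast,
    inv_mul_cancel₀ (pow_pos hc _).ne', ENNReal.ofReal_one, one_mul]

end Plancherel

section WindowedFourier

open scoped FourierTransform Real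

variable {V : Type*} [NormedAddCommGroup V] [InnerProductSpace ℝ V] [FiniteDimensional ℝ V]
  [MeasurableSpace V] [BorelSpace V] {ε : ℝ} {g k a b : V → ℂ}

/-- The windowed (short-time) Fourier transform `(q, p) ↦ ∫ exp(-i⟪p, x⟫/ε) g(x - q) a(x) dx` at
scale `ε` with window `g`. Mathlib's `𝓕` has the character `exp(-2πi⟪·, ·⟫)`, hence the
rescaling of `p`. -/
def windowedFourier (ε : ℝ) (g a : V → ℂ) (z : V × V) : ℂ :=
  𝓕 (fun x => g (x - z.1) * a x) ((2 * π * ε)⁻¹ • z.2)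

theorem measurable_windowedFourier (hg : Measurable g) (ha : Measurable a) :
    Measurable (windowedFourier ε g a) := by
  have : StronglyMeasurable fun y : (V × V) × V =>
      Complex.exp (↑(-2 * π * ⟪y.2, (2 * π * ε)⁻¹ • y.1.2⟫) * Complex.I) •
        (g (y.2 - y.1.1) * a y.2) := Measurable.stronglyMeasurable (by fun_prop)
  unfold windowedFourier
  simpa only [Real.fourier_eq'] using (this.integral_prod_right' (ν := volume)).measurable

theorem measurable_windowedFourier_curry {α : Type*} [MeasurableSpace α] {ψ : V × α → ℂ}
    (hg : Measurable g) (hψ : Measurable ψ) (z : V × V) :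
    Measurable fun y => windowedFourier ε g (fun x => ψ (x, y)) z := by
  have : StronglyMeasurable fun X : V × α =>
      Complex.exp (↑(-2 * π * ⟪X.1, (2 * π * ε)⁻¹ • z.2⟫) * Complex.I) •
        (g (X.1 - z.1) * ψ X) := Measurable.stronglyMeasurable (by fun_prop)
  simpa only [windowedFourier, Real.fourier_eq'] using
    (this.integral_prod_left' (μ := volume)).measurable

theorem integrable_window_mul (hg : MemLp g 2) (ha : MemLp a 2) (q : V) :
    Integrable fun x => g (x - q) * a x :=
  (hg.comp_measurePreserving (measurePreserving_sub_right volume q)).integrable_mul ha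

theorem enorm_windowedFourier_sq_le (hg : AEMeasurable g) (ha : AEMeasurable a) (z : V × V) :
    ‖windowedFourier ε g a z‖ₑ ^ 2 ≤ (∫⁻ y, ‖g y‖ₑ ^ 2) * ∫⁻ x, ‖a x‖ₑ ^ 2 := by
  have hg' : AEMeasurable fun x => g (x - z.1) :=
    hg.comp_quasiMeasurePreserving (measurePreserving_sub_right volume z.1).quasiMeasurePreserving
  have hcauchy := sq_lintegral_mul_le hg'.enorm ha.enorm
  rw [lintegral_sub_right_eq_self (fun y => ‖g y‖ₑ ^ 2) z.1] at hcauchy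
  refine le_trans ?_ hcauchy
  have hexp (t : ℝ) : ‖Complex.exp (t * Complex.I)‖ₑ = 1 := by
    rw [← ofReal_norm, Complex.norm_exp_ofReal_mul_I, ENNReal.ofReal_one]
  gcongr
  simpa only [windowedFourier, Real.fourier_eq', enorm_smul, hexp, one_mul, enorm_mul] using
    enorm_integral_le_lintegral_enorm (μ := volume) fun x : V =>
      Complex.exp (↑(-2 * π * ⟪x, (2 * π * ε)⁻¹ • z.2⟫) * Complex.I) • (g (x - z.1) * a x)

theorem lintegral_lintegral_window_add_sq (hg : Measurable g) (hk : Measurable k)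
    (ha : Measurable a) (hb : Measurable b) (hg2 : MemLp g 2) (hk2 : MemLp k 2)
    (horth : ∫ y, conj (g y) * k y = 0) :
    ∫⁻ q, ∫⁻ x, ‖g (x - q) * a x + k (x - q) * b x‖ₑ ^ 2 =
      (∫⁻ y, ‖g y‖ₑ ^ 2) * (∫⁻ x, ‖a x‖ₑ ^ 2) + (∫⁻ y, ‖k y‖ₑ ^ 2) * ∫⁻ x, ‖b x‖ₑ ^ 2 := by
  rw [lintegral_lintegral_swap (by fun_prop)]
  have htranslate (x : V) : ∫⁻ q, ‖g (x - q) * a x + k (x - q) * b x‖ₑ ^ 2 =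
      (∫⁻ y, ‖g y‖ₑ ^ 2) * ‖a x‖ₑ ^ 2 + (∫⁻ y, ‖k y‖ₑ ^ 2) * ‖b x‖ₑ ^ 2 := by
    rw [lintegral_sub_left_eq_self (fun y => ‖g y * a x + k y * b x‖ₑ ^ 2) x,
      lintegral_enorm_mul_add_mul_sq hg2 hk2 horth]
  simp_rw [htranslate]
  rw [lintegral_add_left (by fun_prop), lintegral_const_mul _ (by fun_prop),
    lintegral_const_mul _ (by fun_prop)]

theorem windowedFourier_add (hg : MemLp g 2) (hk : MemLp k 2) (ha : MemLp a 2) (hb : MemLp b 2)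
    (z : V × V) :
    windowedFourier ε g a z + windowedFourier ε k b z =
      𝓕 (fun x => g (x - z.1) * a x + k (x - z.1) * b x) ((2 * π * ε)⁻¹ • z.2) := by
  simp only [windowedFourier]
  exact congrFun (VectorFourier.fourierIntegral_add (L := innerₗ V) Real.continuous_fourierChar
    continuous_inner (integrable_window_mul hg ha z.1) (integrable_window_mul hk hb z.1)) _ |>.symm

theorem lintegral_enorm_windowedFourier_add_sq (hε : 0 < ε) (hg : Measurable g)
    (hk : Measurable k) (ha : Measurable a) (hb : Measurable b) (hg2 : MemLp g 2)
    (hk2 : MemLp k 2) (ha2 : MemLp a 2) (hb2 : MemLp b 2)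
    (horth : ∫ y, conj (g y) * k y = 0) :
    ENNReal.ofReal ((2 * π * ε) ^ (-(Module.finrank ℝ V : ℝ))) *
        ∫⁻ z, ‖windowedFourier ε g a z + windowedFourier ε k b z‖ₑ ^ 2 =
      (∫⁻ y, ‖g y‖ₑ ^ 2) * (∫⁻ x, ‖a x‖ₑ ^ 2) + (∫⁻ y, ‖k y‖ₑ ^ 2) * ∫⁻ x, ‖b x‖ₑ ^ 2 := by
  have hmass := lintegral_lintegral_window_add_sq hg hk ha hb hg2 hk2 horth
  have hmeas : Measurable fun z => ‖windowedFourier ε g a z + windowedFourier ε k b z‖ₑ ^ 2 :=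
    ((measurable_windowedFourier hg ha).add (measurable_windowedFourier hk hb)).enorm.pow_const 2
  have hfinite : ∀ᵐ q, ∫⁻ x, ‖g (x - q) * a x + k (x - q) * b x‖ₑ ^ 2 < ⊤ := by
    refine ae_lt_top (Measurable.lintegral_prod_right (by fun_prop)) ?_
    rw [hmass]
    finiteness [(memLp_two_iff_lintegral_enorm_sq_ne_top hg2.1).1 hg2,
      (memLp_two_iff_lintegral_enorm_sq_ne_top hk2.1).1 hk2,
      (memLp_two_iff_lintegral_enorm_sq_ne_top ha2.1).1 ha2,
      (memLp_two_iff_lintegral_enorm_sq_ne_top hb2.1).1 hb2]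
  rw [Measure.volume_eq_prod, lintegral_prod _ hmeas.aemeasurable,
    ← lintegral_const_mul _ hmeas.lintegral_prod_right', ← hmass]
  refine lintegral_congr_ae ?_
  filter_upwards [hfinite] with q hq
  simp only [windowedFourier_add hg2 hk2 ha2 hb2]
  exact lintegral_enorm_fourier_inv_smul_sq (by positivity)
    ((integrable_window_mul hg2 ha2 q).add (integrable_window_mul hk2 hb2 q))
    ((memLp_two_iff_lintegral_enorm_sq_ne_top (by fun_prop)).2 hq.ne)

end WindowedFourier

section GaussianWindow

open scoped Real

theorem mul_exp_neg_inv_mul_le {ε : ℝ} (hε : 0 < ε) (t : ℝ) :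
    t * Real.exp (-ε⁻¹ * t) ≤ 2 * ε * Real.exp (-(2 * ε)⁻¹ * t) := by
  have hlin : (2 * ε)⁻¹ * t ≤ Real.exp ((2 * ε)⁻¹ * t) := by
    linarith [Real.add_one_le_exp ((2 * ε)⁻¹ * t)]
  calc t * Real.exp (-ε⁻¹ * t)
      = 2 * ε * ((2 * ε)⁻¹ * t) * Real.exp (-ε⁻¹ * t) := by field_simp
    _ ≤ 2 * ε * Real.exp ((2 * ε)⁻¹ * t) * Real.exp (-ε⁻¹ * t) := by gcongr
    _ = 2 * ε * Real.exp (-(2 * ε)⁻¹ * t) := by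
        rw [mul_assoc, ← Real.exp_add]
        congr 2
        field_simp
        ring

variable {V : Type*} [NormedAddCommGroup V] [InnerProductSpace ℝ V] {ε : ℝ}

/-- The `L²`-normalised centred Gaussian of variance `ε/2`, i.e. the ground state `|0, ε⟩` of the
harmonic oscillator. It is complex-valued so as to serve as a window of `windowedFourier`. -/
def gaussianWindow (ε : ℝ) (x : V) : ℂ :=
  (((π * ε) ^ (-(Module.finrank ℝ V : ℝ) / 4) * Real.exp (-(2 * ε)⁻¹ * ‖x‖ ^ 2) : ℝ) : ℂ)

@[fun_prop]
theorem continuous_gaussianWindow : Continuous (gaussianWindow ε : V → ℂ) := by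
  unfold gaussianWindow
  fun_prop

theorem conj_gaussianWindow (x : V) : conj (gaussianWindow ε x) = gaussianWindow ε x :=
  Complex.conj_ofReal _

theorem gaussianWindow_neg (x : V) : gaussianWindow ε (-x) = gaussianWindow ε x := by
  simp only [gaussianWindow, norm_neg]

theorem norm_gaussianWindow_sq (hε : 0 < ε) (x : V) :
    ‖gaussianWindow ε x‖ ^ 2 =
      (π * ε) ^ (-(Module.finrank ℝ V : ℝ) / 2) * Real.exp (-ε⁻¹ * ‖x‖ ^ 2) := by
  rw [gaussianWindow, Complex.norm_real, Real.norm_of_nonneg (by positivity), mul_pow,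
    ← Real.rpow_mul_natCast (by positivity), ← Real.exp_nat_mul]
  congr 2
  · push_cast; ring
  · push_cast; field_simp

theorem hasLineDerivAt_const_mul_exp_mul_norm_sq (k c : ℝ) (x v : V) :
    HasLineDerivAt ℝ (fun y => k * Real.exp (c * ‖y‖ ^ 2))
      (2 * c * ⟪v, x⟫ * (k * Real.exp (c * ‖x‖ ^ 2))) x v := by
  convert (((hasStrictFDerivAt_norm_sq x).hasFDerivAt.const_mul c).exp.const_mul k).hasLineDerivAt
    v using 1
  simp only [real_inner_comm x v, smul_apply, coe_innerSL_apply, nsmul_eq_mul, Nat.cast_ofNat,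
    smul_eq_mul]
  ring

theorem hasLineDerivAt_gaussianWindow (x v : V) :
    HasLineDerivAt ℝ (gaussianWindow ε) (-(⟪v, x⟫ / ε : ℝ) * gaussianWindow ε x) x v := by
  refine (HasDerivAt.ofReal_comp
    (hasLineDerivAt_const_mul_exp_mul_norm_sq _ (-(2 * ε)⁻¹) x v)).congr_deriv ?_
  rw [Complex.ofReal_mul, ← Complex.ofReal_neg, gaussianWindow]
  congr 2
  ring

theorem hasLineDerivAt_norm_gaussianWindow_sq (hε : 0 < ε) (x v : V) :
    HasLineDerivAt ℝ (fun y => ‖gaussianWindow ε y‖ ^ 2)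
      (2 * -ε⁻¹ * ⟪v, x⟫ * ‖gaussianWindow ε x‖ ^ 2) x v := by
  simpa only [norm_gaussianWindow_sq hε] using
    hasLineDerivAt_const_mul_exp_mul_norm_sq _ (-ε⁻¹) x v

variable [FiniteDimensional ℝ V] [MeasurableSpace V] [BorelSpace V]

theorem integral_norm_gaussianWindow_sq (hε : 0 < ε) :
    ∫ x : V, ‖gaussianWindow ε x‖ ^ 2 = 1 := by
  simp_rw [norm_gaussianWindow_sq hε, integral_const_mul,
    GaussianFourier.integral_rexp_neg_mul_sq_norm (inv_pos.2 hε), div_inv_eq_mul]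
  rw [← Real.rpow_add (by positivity), neg_div, neg_add_cancel, Real.rpow_zero]

theorem integrable_exp_neg_mul_norm_sq {b : ℝ} (hb : 0 < b) :
    Integrable fun x : V => Real.exp (-b * ‖x‖ ^ 2) :=
  .of_integral_ne_zero (by rw [GaussianFourier.integral_rexp_neg_mul_sq_norm hb]; positivity)

theorem integrable_norm_gaussianWindow_sq (hε : 0 < ε) :
    Integrable fun x : V => ‖gaussianWindow ε x‖ ^ 2 := by
  simpa only [norm_gaussianWindow_sq hε] using
    (integrable_exp_neg_mul_norm_sq (inv_pos.2 hε)).const_mul _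

theorem integrable_inner_sq_mul_norm_gaussianWindow_sq (hε : 0 < ε) (v : V) :
    Integrable fun x : V => ⟪v, x⟫ ^ 2 * ‖gaussianWindow ε x‖ ^ 2 := by
  set K : ℝ := (π * ε) ^ (-(Module.finrank ℝ V : ℝ) / 2)
  refine ((integrable_exp_neg_mul_norm_sq (by positivity : 0 < (2 * ε)⁻¹)).const_mul
    (‖v‖ ^ 2 * K * (2 * ε))).mono' (by fun_prop) (.of_forall fun x => ?_)
  have hinner : ⟪v, x⟫ ^ 2 ≤ ‖v‖ ^ 2 * ‖x‖ ^ 2 := by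
    rw [← mul_pow]
    exact sq_le_sq' (neg_le_of_abs_le (abs_real_inner_le_norm v x)) (real_inner_le_norm v x)
  calc ‖⟪v, x⟫ ^ 2 * ‖gaussianWindow ε x‖ ^ 2‖
      = ⟪v, x⟫ ^ 2 * (K * Real.exp (-ε⁻¹ * ‖x‖ ^ 2)) := by
        rw [Real.norm_of_nonneg (by positivity), norm_gaussianWindow_sq hε]
    _ ≤ ‖v‖ ^ 2 * ‖x‖ ^ 2 * (K * Real.exp (-ε⁻¹ * ‖x‖ ^ 2)) := by gcongr
    _ = ‖v‖ ^ 2 * K * (‖x‖ ^ 2 * Real.exp (-ε⁻¹ * ‖x‖ ^ 2)) := by ring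
    _ ≤ ‖v‖ ^ 2 * K * (2 * ε * Real.exp (-(2 * ε)⁻¹ * ‖x‖ ^ 2)) :=
        mul_le_mul_of_nonneg_left (mul_exp_neg_inv_mul_le hε _) (by positivity)
    _ = ‖v‖ ^ 2 * K * (2 * ε) * Real.exp (-(2 * ε)⁻¹ * ‖x‖ ^ 2) := by ring

theorem integral_inner_sq_mul_norm_gaussianWindow_sq (hε : 0 < ε) (v : V) :
    ∫ x : V, ⟪v, x⟫ ^ 2 * ‖gaussianWindow ε x‖ ^ 2 = ε / 2 * ‖v‖ ^ 2 := by
  have hmass := integrable_norm_gaussianWindow_sq (V := V) hε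
  have hmoment := integrable_inner_sq_mul_norm_gaussianWindow_sq hε v
  have hfirst : Integrable fun x : V => ⟪v, x⟫ * ‖gaussianWindow ε x‖ ^ 2 := by
    refine (hmass.add hmoment).mono' (by fun_prop) (.of_forall fun x => ?_)
    rw [norm_mul, norm_pow, norm_norm, Pi.add_apply, ← one_add_mul, Real.norm_eq_abs]
    gcongr
    nlinarith [sq_abs ⟪v, x⟫, sq_nonneg (|⟪v, x⟫| - 1)]
  have parts := integral_bilinear_hasLineDerivAt_right_eq_neg_left_of_integrable
    (f := fun x : V => ⟪v, x⟫) (f' := fun _ => ‖v‖ ^ 2) (g := fun x => ‖gaussianWindow ε x‖ ^ 2)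
    (g' := fun x => 2 * -ε⁻¹ * ⟪v, x⟫ * ‖gaussianWindow ε x‖ ^ 2)
    (B := ContinuousLinearMap.mul ℝ ℝ) (v := v) (μ := volume) (hmass.const_mul _)
    ((hmoment.const_mul (2 * -ε⁻¹)).congr (.of_forall fun x => by simp; ring)) hfirst
    (fun x _ => by simpa using (innerSL ℝ v).hasFDerivAt.hasLineDerivAt v)
    fun x _ => hasLineDerivAt_norm_gaussianWindow_sq hε x v
  have hcongr (x : V) : ⟪v, x⟫ * (2 * -ε⁻¹ * ⟪v, x⟫ * ‖gaussianWindow ε x‖ ^ 2) =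
      2 * -ε⁻¹ * (⟪v, x⟫ ^ 2 * ‖gaussianWindow ε x‖ ^ 2) := by ring
  simp only [ContinuousLinearMap.mul_apply', hcongr, integral_const_mul,
    integral_norm_gaussianWindow_sq hε] at parts
  field_simp at parts ⊢
  linarith

theorem lintegral_enorm_gaussianWindow_sq (hε : 0 < ε) :
    ∫⁻ x : V, ‖gaussianWindow ε x‖ₑ ^ 2 = 1 := by
  simp only [← ofReal_norm, ← ENNReal.ofReal_pow (norm_nonneg _)]
  rw [← ofReal_integral_eq_lintegral_ofReal (integrable_norm_gaussianWindow_sq hε)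
    (.of_forall fun _ => by positivity), integral_norm_gaussianWindow_sq hε, ENNReal.ofReal_one]

theorem lintegral_enorm_inner_mul_gaussianWindow_sq (hε : 0 < ε) (v : V) :
    ∫⁻ x : V, ‖(⟪v, x⟫ : ℂ) * gaussianWindow ε x‖ₑ ^ 2 = ENNReal.ofReal (ε / 2 * ‖v‖ ^ 2) := by
  rw [← integral_inner_sq_mul_norm_gaussianWindow_sq hε, ofReal_integral_eq_lintegral_ofReal
    (integrable_inner_sq_mul_norm_gaussianWindow_sq hε v) (.of_forall fun _ => by positivity)]
  refine lintegral_congr fun x => ?_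
  rw [← ofReal_norm, ← ENNReal.ofReal_pow (norm_nonneg _), norm_mul, mul_pow, Complex.norm_real,
    Real.norm_eq_abs, sq_abs]

theorem memLp_gaussianWindow (hε : 0 < ε) : MemLp (gaussianWindow ε : V → ℂ) 2 :=
  (memLp_two_iff_lintegral_enorm_sq_ne_top (by fun_prop)).2
    (by simp [lintegral_enorm_gaussianWindow_sq hε])

theorem memLp_inner_mul_gaussianWindow (hε : 0 < ε) (v : V) :
    MemLp (fun x : V => (⟪v, x⟫ : ℂ) * gaussianWindow ε x) 2 :=
  (memLp_two_iff_lintegral_enorm_sq_ne_top (by fun_prop)).2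
    (by simp only [lintegral_enorm_inner_mul_gaussianWindow_sq hε, ne_eq, ENNReal.ofReal_ne_top,
      not_false_eq_true])

theorem integral_conj_gaussianWindow_mul_inner_mul (v : V) :
    ∫ x : V, conj (gaussianWindow ε x) * ((⟪v, x⟫ : ℂ) * gaussianWindow ε x) = 0 := by
  refine self_eq_neg.1 ?_
  rw [← integral_neg, ← integral_neg_eq_self]
  simp [gaussianWindow_neg]

end GaussianWindow

section PureHusimi

open scoped FourierTransform Real

variable {V : Type*} [NormedAddCommGroup V] [InnerProductSpace ℝ V] {ε : ℝ}
  {f f' ψ ψ' a b : V → ℂ} {v : V}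

theorem hasLineDerivAt_exp_inner_mul_I (x v w : V) :
    HasLineDerivAt ℝ (fun y => Complex.exp (↑(-2 * π * ⟪y, w⟫) * Complex.I))
      (Complex.exp (↑(-2 * π * ⟪x, w⟫) * Complex.I) * (↑(-2 * π * ⟪v, w⟫) * Complex.I)) x v := by
  have hinner : HasLineDerivAt ℝ (fun y => -2 * π * ⟪y, w⟫) (-2 * π * ⟪v, w⟫) x v := by
    simpa only [HasLineDerivAt, innerSL_apply_apply, real_inner_comm _ w] using
      HasDerivAt.const_mul (-2 * π) ((innerSL ℝ w).hasFDerivAt.hasLineDerivAt v)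
  refine ((HasDerivAt.ofReal_comp hinner).mul_const Complex.I).cexp.congr_deriv ?_
  simp only [zero_smul, add_zero]

theorem hasLineDerivAt_gaussianWindow_sub_mul {x : V} {c : ℂ} (hψ : HasLineDerivAt ℝ ψ c x v)
    (q : V) :
    HasLineDerivAt ℝ (fun y => gaussianWindow ε (y - q) * ψ y)
      (gaussianWindow ε (x - q) * c + -(⟪v, x - q⟫ / ε : ℝ) * gaussianWindow ε (x - q) * ψ x)
      x v := by
  have hwindow : HasLineDerivAt ℝ (fun y => gaussianWindow ε (y - q))
      (-(⟪v, x - q⟫ / ε : ℝ) * gaussianWindow ε (x - q)) x v := by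
    simpa only [HasLineDerivAt, add_sub_right_comm] using
      hasLineDerivAt_gaussianWindow (ε := ε) (x - q) v
  refine (HasDerivAt.mul hwindow hψ).congr_deriv ?_
  simp only [zero_smul, add_zero]
  ring

variable [FiniteDimensional ℝ V] [MeasurableSpace V] [BorelSpace V]

theorem fourier_eq_of_hasLineDerivAt (hf : Integrable f) (hf' : Integrable f')
    (h : ∀ x, HasLineDerivAt ℝ f (f' x) x v) (w : V) :
    𝓕 f' w = 2 * π * Complex.I * ⟪v, w⟫ * 𝓕 f w := by
  have hchar {F : V → ℂ} (hF : Integrable F) := integrable_exp_inner_mul_I_smul hF w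
  have parts := integral_bilinear_hasLineDerivAt_right_eq_neg_left_of_integrable
    (B := ContinuousLinearMap.mul ℝ ℂ) (μ := volume) (v := v)
    (((hchar hf).const_mul (↑(-2 * π * ⟪v, w⟫) * Complex.I)).congr
      (.of_forall fun x => by simp only [ContinuousLinearMap.mul_apply']; ring))
    (hchar hf') (hchar hf) (fun x _ => hasLineDerivAt_exp_inner_mul_I x v w) fun x _ => h x
  simp only [ContinuousLinearMap.mul_apply', mul_right_comm _ (_ * Complex.I),
    integral_mul_const] at parts
  simp only [Real.fourier_eq', smul_eq_mul]
  rw [parts]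
  push_cast
  ring

/-- The Husimi transform of the rank-one operator `|ψ⟩⟨ψ|`, as an extended nonnegative density on
phase space. -/
def pureHusimi (ε : ℝ) (ψ : V → ℂ) (z : V × V) : ℝ≥0∞ :=
  ENNReal.ofReal ((2 * π * ε) ^ (-(Module.finrank ℝ V : ℝ))) *
    ‖windowedFourier ε (gaussianWindow ε) ψ z‖ₑ ^ 2

@[fun_prop]
theorem measurable_pureHusimi (hψ : Measurable ψ) : Measurable (pureHusimi ε ψ) :=
  ((measurable_windowedFourier continuous_gaussianWindow.measurable hψ).enorm.pow_const
    2).const_mul _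

theorem pureHusimi_le (hε : 0 < ε) (hψ : AEMeasurable ψ) (z : V × V) :
    pureHusimi ε ψ z ≤
      ENNReal.ofReal ((2 * π * ε) ^ (-(Module.finrank ℝ V : ℝ))) * ∫⁻ x, ‖ψ x‖ₑ ^ 2 := by
  rw [pureHusimi]
  gcongr
  refine (enorm_windowedFourier_sq_le continuous_gaussianWindow.aemeasurable hψ z).trans_eq ?_
  rw [lintegral_enorm_gaussianWindow_sq hε, one_mul]

theorem pureHusimi_comp_linearIsometryEquiv {W : Type*} [NormedAddCommGroup W]
    [InnerProductSpace ℝ W] [FiniteDimensional ℝ W] [MeasurableSpace W] [BorelSpace W]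
    (A : W ≃ₗᵢ[ℝ] V) (ψ : V → ℂ) (z : W × W) :
    pureHusimi ε (ψ ∘ A) z = pureHusimi ε ψ (A z.1, A z.2) := by
  have hwindow (x : W) : gaussianWindow ε (A x) = gaussianWindow ε x := by
    simp only [gaussianWindow, A.norm_map, A.toLinearEquiv.finrank_eq]
  have hcomp : (fun x => gaussianWindow ε (x - z.1) * (ψ ∘ A) x) =
      (fun y => gaussianWindow ε (y - A z.1) * ψ y) ∘ A := by
    ext x
    simp only [Function.comp_apply, ← map_sub, hwindow]
  simp only [pureHusimi, windowedFourier, hcomp, Real.fourier_comp_linearIsometry, map_smul,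
    A.toLinearEquiv.finrank_eq]

theorem lintegral_enorm_sq_mul_pureHusimi (hε : 0 < ε) {w : V × V → ℂ}
    (ha : Measurable a) (hb : Measurable b) (ha2 : MemLp a 2) (hb2 : MemLp b 2)
    (h : ∀ z, w z * windowedFourier ε (gaussianWindow ε) ψ z =
      windowedFourier ε (gaussianWindow ε) a z +
        windowedFourier ε (fun y => (⟪v, y⟫ : ℂ) * gaussianWindow ε y) b z) :
    ∫⁻ z, ‖w z‖ₑ ^ 2 * pureHusimi ε ψ z =
      (∫⁻ x, ‖a x‖ₑ ^ 2) + ENNReal.ofReal (ε / 2 * ‖v‖ ^ 2) * ∫⁻ x, ‖b x‖ₑ ^ 2 := by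
  have moyal := lintegral_enorm_windowedFourier_add_sq hε continuous_gaussianWindow.measurable
    (by fun_prop) ha hb (memLp_gaussianWindow hε) (memLp_inner_mul_gaussianWindow hε v) ha2 hb2
    (integral_conj_gaussianWindow_mul_inner_mul v)
  rw [lintegral_enorm_gaussianWindow_sq hε, lintegral_enorm_inner_mul_gaussianWindow_sq hε,
    one_mul, ← lintegral_const_mul' _ _ ENNReal.ofReal_ne_top] at moyal
  rw [← moyal]
  refine lintegral_congr fun z => ?_
  rw [← h z, enorm_mul, mul_pow, pureHusimi]
  ring

theorem lintegral_pureHusimi (hε : 0 < ε) (hψ : Measurable ψ) (hψ2 : MemLp ψ 2) :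
    ∫⁻ z, pureHusimi ε ψ z = ∫⁻ x, ‖ψ x‖ₑ ^ 2 := by
  simpa using lintegral_enorm_sq_mul_pureHusimi (ψ := ψ) (w := 1) (v := 0) (b := 0) hε hψ
    measurable_zero hψ2 MemLp.zero (by simp [windowedFourier, Real.fourier_eq'])

theorem inner_fst_mul_windowedFourier_gaussianWindow (hε : 0 < ε) (v : V) (hψ : MemLp ψ 2)
    (hvψ : MemLp (fun x => (⟪v, x⟫ : ℂ) * ψ x) 2) (z : V × V) :
    (⟪v, z.1⟫ : ℂ) * windowedFourier ε (gaussianWindow ε) ψ z =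
      windowedFourier ε (gaussianWindow ε) (fun x => (⟪v, x⟫ : ℂ) * ψ x) z +
        windowedFourier ε (fun y => (⟪v, y⟫ : ℂ) * gaussianWindow ε y) (-ψ) z := by
  rw [windowedFourier_add (memLp_gaussianWindow hε) (memLp_inner_mul_gaussianWindow hε v) hvψ
    hψ.neg, windowedFourier, ← smul_eq_mul]
  refine (congrFun (VectorFourier.fourierIntegral_const_smul (L := innerₗ V) ..) _).symm.trans ?_
  refine congrArg (fun f : V → ℂ => 𝓕 f ((2 * π * ε)⁻¹ • z.2)) (funext fun x => ?_)
  simp only [Pi.smul_apply, Pi.neg_apply, inner_sub_right, smul_eq_mul]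
  push_cast
  ring

theorem inner_snd_mul_windowedFourier_gaussianWindow (hε : 0 < ε) (hψ : MemLp ψ 2)
    (hψ' : MemLp ψ' 2) (hderiv : ∀ x, HasLineDerivAt ℝ ψ (ψ' x) x v) (z : V × V) :
    (⟪v, z.2⟫ : ℂ) * windowedFourier ε (gaussianWindow ε) ψ z =
      windowedFourier ε (gaussianWindow ε) (fun x => -Complex.I * ε * ψ' x) z +
        windowedFourier ε (fun y => (⟪v, y⟫ : ℂ) * gaussianWindow ε y)
          (fun x => Complex.I * ψ x) z := by
  have hε' : (ε : ℂ) ≠ 0 := mod_cast hε.ne'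
  have hπ : (π : ℂ) ≠ 0 := mod_cast Real.pi_ne_zero
  let F' := fun x => gaussianWindow ε (x - z.1) * ψ' x +
    -(⟪v, x - z.1⟫ / ε : ℝ) * gaussianWindow ε (x - z.1) * ψ x
  have hF' : Integrable F' := by
    refine (integrable_window_mul (memLp_gaussianWindow hε) hψ' z.1).add
      (((integrable_window_mul (memLp_inner_mul_gaussianWindow hε v) hψ z.1).const_mul
        (-(ε : ℂ)⁻¹)).congr (.of_forall fun x => ?_))
    push_cast
    ring
  have hfourier := fourier_eq_of_hasLineDerivAt
    (integrable_window_mul (memLp_gaussianWindow hε) hψ z.1) hF'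
    (fun x => hasLineDerivAt_gaussianWindow_sub_mul (hderiv x) z.1) ((2 * π * ε)⁻¹ • z.2)
  rw [windowedFourier_add (memLp_gaussianWindow hε) (memLp_inner_mul_gaussianWindow hε v)
    (hψ'.const_mul _) (hψ.const_mul _)]
  calc (⟪v, z.2⟫ : ℂ) * windowedFourier ε (gaussianWindow ε) ψ z
      = (-Complex.I * ε) • 𝓕 F' ((2 * π * ε)⁻¹ • z.2) := by
        rw [hfourier, inner_smul_right, smul_eq_mul, windowedFourier]
        push_cast
        field_simp
        rw [Complex.I_sq]
        ring
    _ = 𝓕 ((-Complex.I * ε) • F') ((2 * π * ε)⁻¹ • z.2) :=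
        (congrFun (VectorFourier.fourierIntegral_const_smul (L := innerₗ V) ..) _).symm
    _ = _ := by
        refine congrArg (fun f : V → ℂ => 𝓕 f ((2 * π * ε)⁻¹ • z.2)) (funext fun x => ?_)
        simp only [F', Pi.smul_apply, smul_eq_mul]
        push_cast
        field_simp
        ring

theorem lintegral_inner_fst_sq_mul_pureHusimi_le (hε : 0 < ε) (v : V) (hψ : Measurable ψ)
    (hψ2 : MemLp ψ 2) :
    ∫⁻ z, ‖(⟪v, z.1⟫ : ℂ)‖ₑ ^ 2 * pureHusimi ε ψ z ≤
      (∫⁻ x, ‖(⟪v, x⟫ : ℂ) * ψ x‖ₑ ^ 2) +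
        ENNReal.ofReal (ε / 2 * ‖v‖ ^ 2) * ∫⁻ x, ‖ψ x‖ₑ ^ 2 := by
  by_cases htop : ∫⁻ x, ‖(⟪v, x⟫ : ℂ) * ψ x‖ₑ ^ 2 = ⊤
  · simp only [htop, top_add, le_top]
  have hvψ : MemLp (fun x => (⟪v, x⟫ : ℂ) * ψ x) 2 :=
    (memLp_two_iff_lintegral_enorm_sq_ne_top (by fun_prop)).2 htop
  refine le_of_eq ?_
  simpa only [Pi.neg_apply, enorm_neg] using
    lintegral_enorm_sq_mul_pureHusimi hε (by fun_prop) hψ.neg hvψ hψ2.neg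
      (inner_fst_mul_windowedFourier_gaussianWindow hε v hψ2 hvψ)

theorem lintegral_inner_snd_sq_mul_pureHusimi_le (hε : 0 < ε) (hψ : Measurable ψ)
    (hψ' : Measurable ψ') (hψ2 : MemLp ψ 2) (hderiv : ∀ x, HasLineDerivAt ℝ ψ (ψ' x) x v) :
    ∫⁻ z, ‖(⟪v, z.2⟫ : ℂ)‖ₑ ^ 2 * pureHusimi ε ψ z ≤
      (∫⁻ x, ‖-Complex.I * ε * ψ' x‖ₑ ^ 2) +
        ENNReal.ofReal (ε / 2 * ‖v‖ ^ 2) * ∫⁻ x, ‖ψ x‖ₑ ^ 2 := by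
  have hε' : -Complex.I * ε ≠ 0 := by simp [hε.ne']
  by_cases htop : ∫⁻ x, ‖-Complex.I * ε * ψ' x‖ₑ ^ 2 = ⊤
  · simp only [htop, top_add, le_top]
  have hψ'2 : MemLp ψ' 2 := by
    simpa only [inv_mul_cancel_left₀ hε'] using
      ((memLp_two_iff_lintegral_enorm_sq_ne_top (by fun_prop)).2 htop).const_mul
        (-Complex.I * ε)⁻¹
  have hI : ‖Complex.I‖ₑ = 1 := by simp [← ofReal_norm]
  refine le_of_eq ?_
  simpa only [enorm_mul Complex.I, hI, one_mul] using
    lintegral_enorm_sq_mul_pureHusimi hε (by fun_prop) (by fun_prop) (hψ'2.const_mul _)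
      (hψ2.const_mul _) (inner_snd_mul_windowedFourier_gaussianWindow hε hψ2 hψ'2 hderiv)

end PureHusimi

section JointHusimi

open scoped FourierTransform Real
open WithLp (toLp ofLp)

theorem volume_preserving_prodProdProdComm {α β γ δ : Type*} [MeasureSpace α] [MeasureSpace β]
    [MeasureSpace γ] [MeasureSpace δ] [SFinite (volume : Measure α)]
    [SFinite (volume : Measure β)] [SFinite (volume : Measure γ)] [SFinite (volume : Measure δ)] :
    MeasurePreserving (Equiv.prodProdProdComm α β γ δ) := by
  have hinner : MeasurePreserving (fun x : β × γ × δ => (x.2.1, x.1, x.2.2)) :=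
    volume_preserving_prodAssoc.comp <| (Measure.measurePreserving_swap.prod (.id volume)).comp
      (volume_preserving_prodAssoc.symm MeasurableEquiv.prodAssoc)
  exact (volume_preserving_prodAssoc.symm MeasurableEquiv.prodAssoc).comp <|
    ((MeasurePreserving.id volume).prod hinner).comp volume_preserving_prodAssoc

variable {E F : Type*} [NormedAddCommGroup E] [InnerProductSpace ℝ E] [FiniteDimensional ℝ E]
  [NormedAddCommGroup F] [InnerProductSpace ℝ F] [FiniteDimensional ℝ F] {ε : ℝ}

theorem finrank_withLp_prod :
    Module.finrank ℝ (WithLp 2 (E × F)) = Module.finrank ℝ E + Module.finrank ℝ F :=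
  (WithLp.linearEquiv 2 ℝ (E × F)).finrank_eq.trans Module.finrank_prod

theorem gaussianWindow_withLp_prod (hε : 0 < ε) (X : WithLp 2 (E × F)) :
    gaussianWindow ε X = gaussianWindow ε X.fst * gaussianWindow ε X.snd := by
  simp only [gaussianWindow]
  rw [← Complex.ofReal_mul, mul_mul_mul_comm, ← Real.rpow_add (by positivity), ← Real.exp_add,
    finrank_withLp_prod, WithLp.prod_norm_sq_eq_of_L2]
  push_cast
  ring_nf

variable [MeasurableSpace E] [BorelSpace E] [MeasurableSpace F] [BorelSpace F]
  {ψ : E × F → ℂ}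

theorem windowedFourier_gaussianWindow_withLp_prod (hε : 0 < ε) (hψ : MemLp ψ 2)
    (z : E × E) (z' : F × F) :
    windowedFourier ε (gaussianWindow ε) (fun X : WithLp 2 (E × F) => ψ (ofLp X))
        (toLp 2 (z.1, z'.1), toLp 2 (z.2, z'.2)) =
      windowedFourier ε (gaussianWindow ε)
        (fun y => windowedFourier ε (gaussianWindow ε) (fun x => ψ (x, y)) z) z' := by
  have hψ' : MemLp (fun X : WithLp 2 (E × F) => ψ (ofLp X)) 2 :=
    hψ.comp_measurePreserving (WithLp.volume_preserving_ofLp E F)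
  set K : E × F → ℂ := fun X => Complex.exp (↑(-2 * π * ⟪X.2, (2 * π * ε)⁻¹ • z'.2⟫) * Complex.I) *
    (gaussianWindow ε (X.2 - z'.1) *
      (Complex.exp (↑(-2 * π * ⟪X.1, (2 * π * ε)⁻¹ • z.2⟫) * Complex.I) *
        (gaussianWindow ε (X.1 - z.1) * ψ X))) with hK
  have hemb : MeasurableEmbedding (ofLp : WithLp 2 (E × F) → E × F) :=
    (MeasurableEquiv.toLp 2 (E × F)).symm.measurableEmbedding
  have hcongr (X : WithLp 2 (E × F)) :
      Complex.exp (↑(-2 * π * ⟪X, (2 * π * ε)⁻¹ • toLp 2 (z.2, z'.2)⟫) * Complex.I) •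
        (gaussianWindow ε (X - toLp 2 (z.1, z'.1)) * ψ (ofLp X)) = K (ofLp X) := by
    simp only [hK, gaussianWindow_withLp_prod hε, WithLp.prod_inner_apply, smul_eq_mul, mul_add,
      Complex.ofReal_add, add_mul, Complex.exp_add, WithLp.ofLp_fst, WithLp.ofLp_snd,
      WithLp.sub_fst, WithLp.sub_snd, WithLp.toLp_fst, WithLp.toLp_snd, WithLp.ofLp_smul,
      Prod.smul_mk]
    ring
  have hint : Integrable K := by
    rw [← (WithLp.volume_preserving_ofLp E F).integrable_comp_emb hemb]
    simpa only [Function.comp_def, hcongr] using integrable_exp_inner_mul_I_smul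
      (integrable_window_mul (memLp_gaussianWindow hε) hψ' (toLp 2 (z.1, z'.1)))
      ((2 * π * ε)⁻¹ • toLp 2 (z.2, z'.2))
  simp only [windowedFourier, Real.fourier_eq', hcongr]
  rw [(WithLp.volume_preserving_ofLp E F).integral_comp hemb, Measure.volume_eq_prod,
    integral_prod_symm _ hint]
  simp only [hK, smul_eq_mul, integral_const_mul]

theorem memLp_windowedFourier_gaussianWindow_fst (hε : 0 < ε) (hψ : Measurable ψ)
    (hψ2 : MemLp ψ 2) (z : E × E) :
    MemLp (fun y => windowedFourier ε (gaussianWindow ε) (fun x => ψ (x, y)) z) 2 := by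
  refine (memLp_two_iff_lintegral_enorm_sq_ne_top
    (measurable_windowedFourier_curry (by fun_prop) hψ z).aestronglyMeasurable).2
    (ne_top_of_le_ne_top ((memLp_two_iff_lintegral_enorm_sq_ne_top hψ2.1).1 hψ2) ?_)
  rw [Measure.volume_eq_prod, lintegral_prod_symm _ (by fun_prop)]
  refine lintegral_mono fun y => (enorm_windowedFourier_sq_le
    continuous_gaussianWindow.aemeasurable (by fun_prop) z).trans_eq ?_
  rw [lintegral_enorm_gaussianWindow_sq hε, one_mul]

/-- Regroups a pair of phase space points `((q₁, p₁), (q₂, p₂))` into the phase space point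
`((q₁, q₂), (p₁, p₂))` of the two-particle system. -/
def phaseSpaceProd (Z : (E × E) × (F × F)) : WithLp 2 (E × F) × WithLp 2 (E × F) :=
  (toLp 2 (Z.1.1, Z.2.1), toLp 2 (Z.1.2, Z.2.2))

theorem volume_preserving_phaseSpaceProd :
    MeasurePreserving (phaseSpaceProd : (E × E) × (F × F) → _) :=
  ((WithLp.volume_preserving_toLp E F).prod (WithLp.volume_preserving_toLp E F)).comp
    volume_preserving_prodProdProdComm

/-- The Husimi transform of `|ψ⟩⟨ψ|` for a two-particle wave function `ψ`, as a density on pairs of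
one-particle phase space points. -/
def jointHusimi (ε : ℝ) (ψ : E × F → ℂ) (Z : (E × E) × (F × F)) : ℝ≥0∞ :=
  pureHusimi ε (fun X : WithLp 2 (E × F) => ψ (ofLp X)) (phaseSpaceProd Z)

@[fun_prop]
theorem measurable_jointHusimi (hψ : Measurable ψ) : Measurable (jointHusimi ε ψ) :=
  (measurable_pureHusimi (by fun_prop)).comp volume_preserving_phaseSpaceProd.measurable

theorem jointHusimi_mk (hε : 0 < ε) (hψ2 : MemLp ψ 2) (z : E × E) (z' : F × F) :
    jointHusimi ε ψ (z, z') = ENNReal.ofReal ((2 * π * ε) ^ (-(Module.finrank ℝ E : ℝ))) *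
      pureHusimi ε (fun y => windowedFourier ε (gaussianWindow ε) (fun x => ψ (x, y)) z) z' := by
  rw [jointHusimi, phaseSpaceProd, pureHusimi, pureHusimi,
    windowedFourier_gaussianWindow_withLp_prod hε hψ2, ← mul_assoc,
    ← ENNReal.ofReal_mul (by positivity), ← Real.rpow_add (by positivity), finrank_withLp_prod,
    Nat.cast_add, neg_add]

theorem lintegral_jointHusimi_snd (hε : 0 < ε) (hψ : Measurable ψ) (hψ2 : MemLp ψ 2)
    (z : E × E) :
    ∫⁻ z' : F × F, jointHusimi ε ψ (z, z') = ∫⁻ y, pureHusimi ε (fun x => ψ (x, y)) z := by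
  simp only [jointHusimi_mk hε hψ2]
  rw [lintegral_const_mul' _ _ ENNReal.ofReal_ne_top,
    lintegral_pureHusimi hε (measurable_windowedFourier_curry (by fun_prop) hψ z)
      (memLp_windowedFourier_gaussianWindow_fst hε hψ hψ2 z),
    ← lintegral_const_mul' _ _ ENNReal.ofReal_ne_top]
  rfl

theorem jointHusimi_comp_swap (Z : (E × E) × (F × F)) :
    jointHusimi ε (ψ ∘ Prod.swap) Z.swap = jointHusimi ε ψ Z :=
  pureHusimi_comp_linearIsometryEquiv (LinearIsometryEquiv.withLpProdComm 2 ℝ F E)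
    (fun X => ψ (ofLp X)) (phaseSpaceProd Z.swap)

theorem lintegral_jointHusimi (hε : 0 < ε) (hψ : Measurable ψ) (hψ2 : MemLp ψ 2) :
    ∫⁻ Z, jointHusimi ε ψ Z = ∫⁻ X, ‖ψ X‖ₑ ^ 2 := by
  have hofLp := WithLp.volume_preserving_ofLp E F
  calc ∫⁻ Z, jointHusimi ε ψ Z
      = ∫⁻ z, pureHusimi ε (fun X : WithLp 2 (E × F) => ψ (ofLp X)) z :=
        volume_preserving_phaseSpaceProd.lintegral_comp (measurable_pureHusimi (by fun_prop))
    _ = ∫⁻ X : WithLp 2 (E × F), ‖ψ (ofLp X)‖ₑ ^ 2 :=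
        lintegral_pureHusimi hε (by fun_prop) (hψ2.comp_measurePreserving hofLp)
    _ = ∫⁻ X, ‖ψ X‖ₑ ^ 2 := hofLp.lintegral_comp (f := fun X => ‖ψ X‖ₑ ^ 2) (by fun_prop)

end JointHusimi

section PartialTrace

variable {X W : Type*} [MeasurableSpace X] [MeasurableSpace W] {μ : Measure X} {ν : Measure W}
  [SFinite μ] [SFinite ν]

theorem measurable_mul_conj_fiber {u : X × W → ℂ} (hu : Measurable u) :
    Measurable fun v : (X × X) × W => u (v.1.1, v.2) * conj (u (v.1.2, v.2)) := by
  fun_prop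

theorem lintegral_enorm_mul_conj_fiber {u : X × W → ℂ} (hu : Measurable u) :
    ∫⁻ v, ‖u (v.1.1, v.2) * conj (u (v.1.2, v.2))‖ₑ ∂(μ.prod μ).prod ν =
      ∫⁻ w, (∫⁻ x, ‖u (x, w)‖ₑ ∂μ) ^ 2 ∂ν := by
  rw [lintegral_prod_symm _ (measurable_mul_conj_fiber hu).enorm.aemeasurable]
  refine lintegral_congr fun w => ?_
  simp only [enorm_mul, RCLike.enorm_conj]
  rw [lintegral_prod_mul (f := fun x => ‖u (x, w)‖ₑ) (g := fun y => ‖u (y, w)‖ₑ)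
    (by fun_prop) (by fun_prop), sq]

theorem integral_mul_conj_fiber {u : X × W → ℂ} (hu : Measurable u)
    (hfin : ∫⁻ w, (∫⁻ x, ‖u (x, w)‖ₑ ∂μ) ^ 2 ∂ν ≠ ⊤) :
    ∫ v, u (v.1.1, v.2) * conj (u (v.1.2, v.2)) ∂(μ.prod μ).prod ν =
      ((∫⁻ w, ‖∫ x, u (x, w) ∂μ‖ₑ ^ 2 ∂ν).toReal : ℂ) := by
  have hmeas : Measurable fun w => ∫ x, u (x, w) ∂μ :=
    hu.stronglyMeasurable.integral_prod_left'.measurable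
  have hint : Integrable (fun v => u (v.1.1, v.2) * conj (u (v.1.2, v.2)))
      ((μ.prod μ).prod ν) := by
    refine ⟨(measurable_mul_conj_fiber hu).aestronglyMeasurable, ?_⟩
    rwa [HasFiniteIntegral, lintegral_enorm_mul_conj_fiber hu, lt_top_iff_ne_top]
  calc ∫ v, u (v.1.1, v.2) * conj (u (v.1.2, v.2)) ∂(μ.prod μ).prod ν
      = ∫ w, ((‖∫ x, u (x, w) ∂μ‖ ^ 2 : ℝ) : ℂ) ∂ν := by
        rw [integral_prod_symm _ hint]
        refine integral_congr_ae (.of_forall fun w => ?_)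
        simp only [integral_prod_mul (fun x => u (x, w)) fun y => conj (u (y, w)), integral_conj,
          Complex.mul_conj, Complex.normSq_eq_norm_sq]
    _ = ((∫⁻ w, ‖∫ x, u (x, w) ∂μ‖ₑ ^ 2 ∂ν).toReal : ℂ) := by
        rw [integral_complex_ofReal, integral_eq_lintegral_of_nonneg_ae
          (.of_forall fun w => by positivity) (hmeas.norm.pow_const 2).aestronglyMeasurable]
        simp only [ENNReal.ofReal_pow (norm_nonneg _), ofReal_norm]

theorem integral_integral_tsum_mul_conj_fiber {u : ℕ → X × W → ℂ} (hu : ∀ n, Measurable (u n))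
    (hfin : ∑' n, ∫⁻ w, (∫⁻ x, ‖u n (x, w)‖ₑ ∂μ) ^ 2 ∂ν ≠ ⊤) :
    ∫ z, ∫ w, ∑' n, u n (z.1, w) * conj (u n (z.2, w)) ∂ν ∂μ.prod μ =
      ((∑' n, ∫⁻ w, ‖∫ x, u n (x, w) ∂μ‖ₑ ^ 2 ∂ν).toReal : ℂ) := by
  set F : ℕ → (X × X) × W → ℂ := fun n v => u n (v.1.1, v.2) * conj (u n (v.1.2, v.2))
  have hF (n : ℕ) : Measurable (F n) := measurable_mul_conj_fiber (hu n)
  have hFnorm : ∑' n, ∫⁻ v, ‖F n v‖ₑ ∂(μ.prod μ).prod ν ≠ ⊤ := by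
    simpa only [F, lintegral_enorm_mul_conj_fiber (hu _)] using hfin
  have hFint : Integrable (fun v => ∑' n, F n v) ((μ.prod μ).prod ν) := by
    refine ⟨(Measurable.tsum hF).aestronglyMeasurable, lt_of_le_of_lt ?_ hFnorm.lt_top⟩
    rw [← lintegral_tsum fun n => (hF n).enorm.aemeasurable]
    exact lintegral_mono fun _ => enorm_tsum_le_tsum_enorm
  have hfin' := ENNReal.ne_top_of_tsum_ne_top hfin
  calc ∫ z, ∫ w, ∑' n, F n (z, w) ∂ν ∂μ.prod μ
      = ∑' n, ∫ v, F n v ∂(μ.prod μ).prod ν := by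
        rw [← integral_prod _ hFint, integral_tsum (fun n => (hF n).aestronglyMeasurable) hFnorm]
    _ = ∑' n, ((∫⁻ w, ‖∫ x, u n (x, w) ∂μ‖ₑ ^ 2 ∂ν).toReal : ℂ) :=
        tsum_congr fun n => integral_mul_conj_fiber (hu n) (hfin' n)
    _ = ((∑' n, ∫⁻ w, ‖∫ x, u n (x, w) ∂μ‖ₑ ^ 2 ∂ν).toReal : ℂ) := by
        rw [← Complex.ofReal_tsum, ENNReal.tsum_toReal_eq fun n =>
          ne_top_of_le_ne_top (hfin' n) (lintegral_mono fun w => by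
            gcongr; exact enorm_integral_le_lintegral_enorm _)]

theorem lintegral_sq_lintegral_enorm_mul_le {χ : X → ℂ} {ψ : X × W → ℂ} (hχ : Measurable χ)
    (hψ : Measurable ψ) :
    ∫⁻ w, (∫⁻ x, ‖conj (χ x) * ψ (x, w)‖ₑ ∂μ) ^ 2 ∂ν ≤
      (∫⁻ x, ‖χ x‖ₑ ^ 2 ∂μ) * ∫⁻ v, ‖ψ v‖ₑ ^ 2 ∂μ.prod ν := by
  rw [lintegral_prod_symm _ (by fun_prop), ← lintegral_const_mul _ (by fun_prop)]
  simp only [enorm_mul, RCLike.enorm_conj]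
  exact lintegral_mono fun w => sq_lintegral_mul_le (by fun_prop) (by fun_prop)

variable {χ : X → ℂ} {lam : ℕ → ℝ} {ψ : ℕ → X × W → ℂ}

theorem tsum_mul_lintegral_sq_lintegral_enorm_mul_ne_top (hχ : Measurable χ) (hχ2 : MemLp χ 2 μ)
    (hψ : ∀ n, Measurable (ψ n))
    (htrace : ∑' n, ENNReal.ofReal (lam n) * ∫⁻ v, ‖ψ n v‖ₑ ^ 2 ∂μ.prod ν ≠ ⊤) :
    ∑' n, ENNReal.ofReal (lam n) * ∫⁻ w, (∫⁻ x, ‖conj (χ x) * ψ n (x, w)‖ₑ ∂μ) ^ 2 ∂ν ≠ ⊤ := by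
  refine ne_top_of_le_ne_top (ENNReal.mul_ne_top
    ((memLp_two_iff_lintegral_enorm_sq_ne_top hχ2.1).1 hχ2) htrace) ?_
  rw [← ENNReal.tsum_mul_left]
  refine ENNReal.tsum_le_tsum fun n => ?_
  rw [mul_left_comm]
  gcongr
  exact lintegral_sq_lintegral_enorm_mul_le hχ (hψ n)

theorem tsum_mul_lintegral_enorm_integral_sq_ne_top (hχ : Measurable χ) (hχ2 : MemLp χ 2 μ)
    (hψ : ∀ n, Measurable (ψ n))
    (htrace : ∑' n, ENNReal.ofReal (lam n) * ∫⁻ v, ‖ψ n v‖ₑ ^ 2 ∂μ.prod ν ≠ ⊤) :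
    ∑' n, ENNReal.ofReal (lam n) * ∫⁻ w, ‖∫ x, conj (χ x) * ψ n (x, w) ∂μ‖ₑ ^ 2 ∂ν ≠ ⊤ := by
  refine ne_top_of_le_ne_top
    (tsum_mul_lintegral_sq_lintegral_enorm_mul_ne_top hχ hχ2 hψ htrace) ?_
  gcongr
  exact enorm_integral_le_lintegral_enorm _

theorem integral_conj_mul_mul_integral_tsum (hχ : Measurable χ) (hχ2 : MemLp χ 2 μ)
    (hlam : ∀ n, 0 ≤ lam n) (hψ : ∀ n, Measurable (ψ n))
    (htrace : ∑' n, ENNReal.ofReal (lam n) * ∫⁻ v, ‖ψ n v‖ₑ ^ 2 ∂μ.prod ν ≠ ⊤) :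
    ∫ z, conj (χ z.1) * χ z.2 *
        ∫ w, ∑' n, (lam n : ℂ) * ψ n (z.1, w) * conj (ψ n (z.2, w)) ∂ν ∂μ.prod μ =
      ((∑' n, ENNReal.ofReal (lam n) *
        ∫⁻ w, ‖∫ x, conj (χ x) * ψ n (x, w) ∂μ‖ₑ ^ 2 ∂ν).toReal : ℂ) := by
  have hsqrt (n : ℕ) : ‖(√(lam n) : ℂ)‖ₑ ^ 2 = ENNReal.ofReal (lam n) := by
    rw [← ofReal_norm, ← ENNReal.ofReal_pow (norm_nonneg _), Complex.norm_real, Real.norm_eq_abs,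
      sq_abs, Real.sq_sqrt (hlam n)]
  set u : ℕ → X × W → ℂ := fun n v => √(lam n) * (conj (χ v.1) * ψ n v)
  have hu (n : ℕ) : Measurable (u n) := by have := hψ n; fun_prop
  have hfin : ∑' n, ∫⁻ w, (∫⁻ x, ‖u n (x, w)‖ₑ ∂μ) ^ 2 ∂ν ≠ ⊤ := by
    simpa only [u, enorm_mul (√(lam _) : ℂ), lintegral_const_mul' _ _ enorm_ne_top, mul_pow,
      hsqrt, lintegral_const_mul' _ _ ENNReal.ofReal_ne_top] using
      tsum_mul_lintegral_sq_lintegral_enorm_mul_ne_top hχ hχ2 hψ htrace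
  calc _ = ∫ z, ∫ w, ∑' n, u n (z.1, w) * conj (u n (z.2, w)) ∂ν ∂μ.prod μ := by
        refine integral_congr_ae (.of_forall fun z => ?_)
        simp only [← integral_const_mul, ← tsum_mul_left]
        refine integral_congr_ae (.of_forall fun w => tsum_congr fun n => ?_)
        have hmul : (lam n : ℂ) = √(lam n) * √(lam n) := by
          rw [← Complex.ofReal_mul, Real.mul_self_sqrt (hlam n)]
        simp only [u, hmul, map_mul, Complex.conj_conj, Complex.conj_ofReal]
        ring
    _ = _ := by
        rw [integral_integral_tsum_mul_conj_fiber hu hfin]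
        simp only [u, integral_const_mul, enorm_mul (√(lam _) : ℂ), mul_pow, hsqrt,
          lintegral_const_mul' _ _ ENNReal.ofReal_ne_top]

theorem tsum_mul_lintegral_enorm_integral_sq_eq_of_partialTrace_eq {W' : Type*}
    [MeasurableSpace W'] {ν' : Measure W'} [SFinite ν'] {lam' : ℕ → ℝ} {ψ' : ℕ → X × W' → ℂ}
    (hχ : Measurable χ) (hχ2 : MemLp χ 2 μ) (hlam : ∀ n, 0 ≤ lam n) (hlam' : ∀ n, 0 ≤ lam' n)
    (hψ : ∀ n, Measurable (ψ n)) (hψ' : ∀ n, Measurable (ψ' n))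
    (htrace : ∑' n, ENNReal.ofReal (lam n) * ∫⁻ v, ‖ψ n v‖ₑ ^ 2 ∂μ.prod ν ≠ ⊤)
    (htrace' : ∑' n, ENNReal.ofReal (lam' n) * ∫⁻ v, ‖ψ' n v‖ₑ ^ 2 ∂μ.prod ν' ≠ ⊤)
    (heq : ∀ x y, ∫ w, ∑' n, (lam n : ℂ) * ψ n (x, w) * conj (ψ n (y, w)) ∂ν =
      ∫ w, ∑' n, (lam' n : ℂ) * ψ' n (x, w) * conj (ψ' n (y, w)) ∂ν') :
    ∑' n, ENNReal.ofReal (lam n) * ∫⁻ w, ‖∫ x, conj (χ x) * ψ n (x, w) ∂μ‖ₑ ^ 2 ∂ν =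
      ∑' n, ENNReal.ofReal (lam' n) * ∫⁻ w, ‖∫ x, conj (χ x) * ψ' n (x, w) ∂μ‖ₑ ^ 2 ∂ν' := by
  rw [← ENNReal.toReal_eq_toReal_iff'
    (tsum_mul_lintegral_enorm_integral_sq_ne_top hχ hχ2 hψ htrace)
    (tsum_mul_lintegral_enorm_integral_sq_ne_top hχ hχ2 hψ' htrace'), ← Complex.ofReal_inj,
    ← integral_conj_mul_mul_integral_tsum hχ hχ2 hlam hψ htrace,
    ← integral_conj_mul_mul_integral_tsum hχ hχ2 hlam' hψ' htrace']
  simp only [heq]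

end PartialTrace

section Husimi

variable {d : ℕ} {ε : ℝ} {lam : ℕ → ℝ} {φ : ℕ → EuclideanSpace ℝ (Fin d) → ℂ}

theorem coh_eq_exp_smul_gaussianWindow (q p x : EuclideanSpace ℝ (Fin d)) :
    coh d ε q p x = Complex.exp ((⟪p, x⟫ / ε : ℝ) * Complex.I) • gaussianWindow ε (x - q) := by
  rw [coh, gaussianWindow, finrank_euclideanSpace_fin, Complex.exp_add, smul_eq_mul]
  push_cast
  ring_nf

theorem memLp_coh (hε : 0 < ε) (q p : EuclideanSpace ℝ (Fin d)) : MemLp (coh d ε q p) 2 := by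
  refine ((memLp_gaussianWindow hε).comp_measurePreserving
    (measurePreserving_sub_right volume q)).of_le (by unfold coh; fun_prop)
    (.of_forall fun x => ?_)
  rw [coh_eq_exp_smul_gaussianWindow, norm_smul, Complex.norm_exp_ofReal_mul_I, one_mul]
  rfl

theorem integral_conj_coh_mul (a : EuclideanSpace ℝ (Fin d) → ℂ)
    (z : EuclideanSpace ℝ (Fin d) × EuclideanSpace ℝ (Fin d)) :
    ∫ x, conj (coh d ε z.1 z.2 x) * a x = windowedFourier ε (gaussianWindow ε) a z := by
  rw [windowedFourier, Real.fourier_eq']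
  refine integral_congr_ae (.of_forall fun x => ?_)
  simp only [coh_eq_exp_smul_gaussianWindow, smul_eq_mul, map_mul, conj_gaussianWindow,
    ← Complex.exp_conj, Complex.conj_ofReal, Complex.conj_I, mul_assoc]
  congr 2
  rw [inner_smul_right, real_inner_comm]
  push_cast
  field_simp

theorem pureHusimi_eq_enorm_integral_conj_coh_mul_sq (a : EuclideanSpace ℝ (Fin d) → ℂ)
    (z : EuclideanSpace ℝ (Fin d) × EuclideanSpace ℝ (Fin d)) :
    pureHusimi ε a z = ENNReal.ofReal ((2 * Real.pi * ε) ^ (-(d : ℝ))) *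
      ‖∫ x, conj (coh d ε z.1 z.2 x) * a x‖ₑ ^ 2 := by
  rw [integral_conj_coh_mul, pureHusimi, finrank_euclideanSpace_fin]

theorem husimi_eq_toReal_tsum_pureHusimi (hε : 0 < ε) (hlam : ∀ n, 0 ≤ lam n)
    (z : EuclideanSpace ℝ (Fin d) × EuclideanSpace ℝ (Fin d)) :
    husimi d ε lam φ z = (∑' n, ENNReal.ofReal (lam n) * pureHusimi ε (φ n) z).toReal := by
  simp only [pureHusimi_eq_enorm_integral_conj_coh_mul_sq]
  rw [ENNReal.tsum_toReal_eq fun n => by finiteness, husimi, ← tsum_mul_left]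
  refine tsum_congr fun n => ?_
  rw [ENNReal.toReal_mul, ENNReal.toReal_mul, ENNReal.toReal_pow, toReal_enorm,
    ENNReal.toReal_ofReal (hlam n), ENNReal.toReal_ofReal (by positivity),
    Complex.normSq_eq_norm_sq, mul_left_comm]

theorem tsum_mul_pureHusimi_ne_top (hε : 0 < ε) (hφ : ∀ n, Measurable (φ n))
    (htrace : ∑' n, ENNReal.ofReal (lam n) * ∫⁻ x, ‖φ n x‖ₑ ^ 2 ≠ ⊤)
    (z : EuclideanSpace ℝ (Fin d) × EuclideanSpace ℝ (Fin d)) :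
    ∑' n, ENNReal.ofReal (lam n) * pureHusimi ε (φ n) z ≠ ⊤ := by
  refine ne_top_of_le_ne_top ?_ (ENNReal.tsum_le_tsum fun n =>
    mul_le_mul_right (pureHusimi_le hε (hφ n).aemeasurable z) _)
  simp only [mul_left_comm (ENNReal.ofReal (lam _)), ENNReal.tsum_mul_left]
  exact ENNReal.mul_ne_top ENNReal.ofReal_ne_top htrace

theorem tsum_mul_lintegral_pureHusimi_eq {W : Type*} [MeasurableSpace W] (ν : Measure W)
    (ψ : ℕ → EuclideanSpace ℝ (Fin d) × W → ℂ)
    (z : EuclideanSpace ℝ (Fin d) × EuclideanSpace ℝ (Fin d)) :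
    ∑' n, ENNReal.ofReal (lam n) * ∫⁻ w, pureHusimi ε (fun x => ψ n (x, w)) z ∂ν =
      ENNReal.ofReal ((2 * Real.pi * ε) ^ (-(d : ℝ))) * ∑' n, ENNReal.ofReal (lam n) *
        ∫⁻ w, ‖∫ x, conj (coh d ε z.1 z.2 x) * ψ n (x, w)‖ₑ ^ 2 ∂ν := by
  simp only [pureHusimi_eq_enorm_integral_conj_coh_mul_sq, ← ENNReal.tsum_mul_left,
    lintegral_const_mul' _ _ ENNReal.ofReal_ne_top, mul_left_comm]

theorem ofReal_husimi_eq_of_partialTrace_eq {W : Type*} [MeasurableSpace W] {ν : Measure W}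
    [SFinite ν] {lam' : ℕ → ℝ} {ψ : ℕ → EuclideanSpace ℝ (Fin d) × W → ℂ} (hε : 0 < ε)
    (hlam : ∀ n, 0 ≤ lam n) (hlam' : ∀ n, 0 ≤ lam' n)
    (hφ : ∀ n, Measurable (φ n)) (hψ : ∀ n, Measurable (ψ n))
    (htrace : ∑' n, ENNReal.ofReal (lam n) * ∫⁻ x, ‖φ n x‖ₑ ^ 2 ≠ ⊤)
    (htrace' : ∑' n, ENNReal.ofReal (lam' n) * ∫⁻ v, ‖ψ n v‖ₑ ^ 2 ∂volume.prod ν ≠ ⊤)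
    (hkernel : ∀ x y, ∫ w, ∑' n, (lam' n : ℂ) * ψ n (x, w) * conj (ψ n (y, w)) ∂ν =
      densKernel d lam φ x y) (z : EuclideanSpace ℝ (Fin d) × EuclideanSpace ℝ (Fin d)) :
    ENNReal.ofReal (husimi d ε lam φ z) =
      ∑' n, ENNReal.ofReal (lam' n) * ∫⁻ w, pureHusimi ε (fun x => ψ n (x, w)) z ∂ν := by
  -- `∑ λₙ |φₙ⟩⟨φₙ|` is regarded as its own partial trace over the one-point space `Unit`.
  have hunit (n : ℕ) : ∫⁻ v : _ × Unit, ‖φ n v.1‖ₑ ^ 2 ∂volume.prod (Measure.dirac ()) =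
      ∫⁻ x, ‖φ n x‖ₑ ^ 2 := by
    have := hφ n
    rw [lintegral_prod _ (by fun_prop)]
    simp only [lintegral_dirac]
  have hamplitude := tsum_mul_lintegral_enorm_integral_sq_eq_of_partialTrace_eq
    (χ := coh d ε z.1 z.2) (ν' := Measure.dirac ()) (ψ' := fun n v => φ n v.1)
    (by unfold coh; fun_prop) (memLp_coh hε z.1 z.2) hlam' hlam hψ (by fun_prop) htrace'
    (by simpa only [hunit] using htrace)
    (by simpa only [integral_dirac, densKernel] using hkernel)
  calc ENNReal.ofReal (husimi d ε lam φ z)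
      = ∑' n, ENNReal.ofReal (lam n) * pureHusimi ε (φ n) z := by
        rw [husimi_eq_toReal_tsum_pureHusimi hε hlam,
          ENNReal.ofReal_toReal (tsum_mul_pureHusimi_ne_top hε hφ htrace z)]
    _ = ∑' n, ENNReal.ofReal (lam n) *
          ∫⁻ _, pureHusimi ε (fun x => φ n x) z ∂Measure.dirac () := by
        simp only [lintegral_dirac]
    _ = ∑' n, ENNReal.ofReal (lam' n) * ∫⁻ w, pureHusimi ε (fun x => ψ n (x, w)) z ∂ν := by
        rw [tsum_mul_lintegral_pureHusimi_eq ν ψ z, hamplitude]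
        exact tsum_mul_lintegral_pureHusimi_eq _ (fun n (v : _ × Unit) => φ n v.1) z

end Husimi

section TransportCost

open WithLp (toLp ofLp)

variable {E F : Type*} [NormedAddCommGroup E] [InnerProductSpace ℝ E] [FiniteDimensional ℝ E]
  [MeasurableSpace E] [BorelSpace E] [NormedAddCommGroup F] [InnerProductSpace ℝ F]
  [FiniteDimensional ℝ F] [MeasurableSpace F] [BorelSpace F] {ε : ℝ} {ψ : E × F → ℂ}

theorem lintegral_inner_fst_sq_mul_jointHusimi_le (hε : 0 < ε) (v : E × F) (hψ : Measurable ψ)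
    (hψ2 : MemLp ψ 2) :
    ∫⁻ Z, ‖((⟪v.1, Z.1.1⟫ + ⟪v.2, Z.2.1⟫ : ℝ) : ℂ)‖ₑ ^ 2 * jointHusimi ε ψ Z ≤
      (∫⁻ X, ‖((⟪v.1, X.1⟫ + ⟪v.2, X.2⟫ : ℝ) : ℂ) * ψ X‖ₑ ^ 2) +
        ENNReal.ofReal (ε / 2 * (‖v.1‖ ^ 2 + ‖v.2‖ ^ 2)) * ∫⁻ X, ‖ψ X‖ₑ ^ 2 := by
  have hofLp := WithLp.volume_preserving_ofLp E F
  have hmoment := lintegral_inner_fst_sq_mul_pureHusimi_le hε (toLp 2 v)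
    (hψ.comp hofLp.measurable) (hψ2.comp_measurePreserving hofLp)
  rw [← volume_preserving_phaseSpaceProd.lintegral_comp (by fun_prop),
    WithLp.prod_norm_sq_eq_of_L2] at hmoment
  simp only [WithLp.prod_inner_apply] at hmoment
  rw [← hofLp.lintegral_comp (by fun_prop), ← hofLp.lintegral_comp (by fun_prop)]
  exact hmoment

theorem lintegral_inner_snd_sq_mul_jointHusimi_le (hε : 0 < ε) (v : E × F)
    (hψ : Differentiable ℝ ψ) (hψ2 : MemLp ψ 2) :
    ∫⁻ Z, ‖((⟪v.1, Z.1.2⟫ + ⟪v.2, Z.2.2⟫ : ℝ) : ℂ)‖ₑ ^ 2 * jointHusimi ε ψ Z ≤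
      (∫⁻ X, ‖-Complex.I * ε * fderiv ℝ ψ X v‖ₑ ^ 2) +
        ENNReal.ofReal (ε / 2 * (‖v.1‖ ^ 2 + ‖v.2‖ ^ 2)) * ∫⁻ X, ‖ψ X‖ₑ ^ 2 := by
  have hofLp := WithLp.volume_preserving_ofLp E F
  have hψm : Measurable ψ := hψ.continuous.measurable
  have hψ' : Measurable fun X => fderiv ℝ ψ X v := measurable_fderiv_apply_const ℝ ψ v
  have hderiv (X : WithLp 2 (E × F)) :
      HasLineDerivAt ℝ (fun X => ψ (ofLp X)) (fderiv ℝ ψ (ofLp X) v) X (toLp 2 v) :=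
    ((hψ (ofLp X)).hasFDerivAt.comp X
      (WithLp.prodContinuousLinearEquiv 2 ℝ E F).hasFDerivAt).hasLineDerivAt (toLp 2 v)
  have hmoment := lintegral_inner_snd_sq_mul_pureHusimi_le hε (hψm.comp hofLp.measurable)
    (hψ'.comp hofLp.measurable) (hψ2.comp_measurePreserving hofLp) hderiv
  rw [← volume_preserving_phaseSpaceProd.lintegral_comp (by fun_prop),
    WithLp.prod_norm_sq_eq_of_L2] at hmoment
  simp only [WithLp.prod_inner_apply] at hmoment
  rw [← hofLp.lintegral_comp (by fun_prop), ← hofLp.lintegral_comp (by fun_prop)]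
  exact hmoment

end TransportCost

section CostForm

variable {d : ℕ} {ε : ℝ}
  {ψ : EuclideanSpace ℝ (Fin d) × EuclideanSpace ℝ (Fin d) → ℂ}

theorem enorm_ofReal_sq (r : ℝ) : ‖(r : ℂ)‖ₑ ^ 2 = ENNReal.ofReal (r ^ 2) := by
  rw [← ofReal_norm, Complex.norm_real, ← ENNReal.ofReal_pow (norm_nonneg r), Real.norm_eq_abs,
    sq_abs]

theorem lintegral_position_sub_sq_mul_jointHusimi_le (hε : 0 < ε) (i : Fin d)
    (hψ : Measurable ψ) (hψ2 : MemLp ψ 2) :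
    ∫⁻ Z, ENNReal.ofReal ((Z.1.1 i - Z.2.1 i) ^ 2) * jointHusimi ε ψ Z ≤
      (∫⁻ X, ‖Qop d i ψ X‖ₑ ^ 2) + ENNReal.ofReal ε * ∫⁻ X, ‖ψ X‖ₑ ^ 2 := by
  have hmoment := lintegral_inner_fst_sq_mul_jointHusimi_le hε
    (EuclideanSpace.single i 1, -EuclideanSpace.single i 1) hψ hψ2
  simpa [Qop, enorm_ofReal_sq, EuclideanSpace.inner_single_left, ← sub_eq_add_neg,
    one_add_one_eq_two, -Complex.ofReal_sub] using hmoment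

theorem lintegral_momentum_sub_sq_mul_jointHusimi_le (hε : 0 < ε) (i : Fin d)
    (hψ : Differentiable ℝ ψ) (hψ2 : MemLp ψ 2) :
    ∫⁻ Z, ENNReal.ofReal ((Z.1.2 i - Z.2.2 i) ^ 2) * jointHusimi ε ψ Z ≤
      (∫⁻ X, ‖Pop d ε i ψ X‖ₑ ^ 2) + ENNReal.ofReal ε * ∫⁻ X, ‖ψ X‖ₑ ^ 2 := by
  have hmoment := lintegral_inner_snd_sq_mul_jointHusimi_le hε
    (EuclideanSpace.single i 1, -EuclideanSpace.single i 1) hψ hψ2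
  simpa [Pop, ← map_sub, enorm_ofReal_sq, EuclideanSpace.inner_single_left, ← sub_eq_add_neg,
    one_add_one_eq_two, -Complex.ofReal_sub] using hmoment

theorem lintegral_transportCost_mul_jointHusimi_le (hε : 0 < ε) (hψ : Differentiable ℝ ψ)
    (hψ2 : MemLp ψ 2) :
    ∫⁻ Z, ENNReal.ofReal (‖Z.1.1 - Z.2.1‖ ^ 2 + ‖Z.1.2 - Z.2.2‖ ^ 2) * jointHusimi ε ψ Z ≤
      costForm d ε ψ + ENNReal.ofReal (2 * d * ε) * ∫⁻ X, ‖ψ X‖ₑ ^ 2 := by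
  have hψm : Measurable ψ := hψ.continuous.measurable
  have hexpand (Z : (EuclideanSpace ℝ (Fin d) × EuclideanSpace ℝ (Fin d)) ×
      (EuclideanSpace ℝ (Fin d) × EuclideanSpace ℝ (Fin d))) :
      ENNReal.ofReal (‖Z.1.1 - Z.2.1‖ ^ 2 + ‖Z.1.2 - Z.2.2‖ ^ 2) = ∑ i,
        (ENNReal.ofReal ((Z.1.1 i - Z.2.1 i) ^ 2) + ENNReal.ofReal ((Z.1.2 i - Z.2.2 i) ^ 2)) := by
    simp only [EuclideanSpace.real_norm_sq_eq, ← Finset.sum_add_distrib, PiLp.sub_apply,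
      ← ENNReal.ofReal_add (sq_nonneg _) (sq_nonneg _)]
    exact ENNReal.ofReal_sum_of_nonneg fun i _ => by positivity
  have hconst : ENNReal.ofReal (2 * d * ε) =
      ∑ _i : Fin d, (ENNReal.ofReal ε + ENNReal.ofReal ε) := by
    rw [← ENNReal.ofReal_add hε.le hε.le, Finset.sum_const, Finset.card_fin, ← ENNReal.ofReal_nsmul]
    ring_nf
  simp only [hexpand, Finset.sum_mul, add_mul, costForm, hconst, ← Finset.sum_add_distrib]
  rw [lintegral_finsetSum _ fun i _ => by fun_prop]
  refine Finset.sum_le_sum fun i _ => ?_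
  rw [lintegral_add_left (by fun_prop), add_add_add_comm]
  exact add_le_add (lintegral_position_sub_sq_mul_jointHusimi_le hε i hψm hψ2)
    (lintegral_momentum_sub_sq_mul_jointHusimi_le hε i hψ hψ2)

end CostForm

section ClassicalCoupling

theorem map_fst_withDensity_prod {α β : Type*} [MeasurableSpace α] [MeasurableSpace β]
    {μ : Measure α} {ν : Measure β} [SFinite μ] [SFinite ν] {f : α × β → ℝ≥0∞}
    (hf : Measurable f) :
    ((μ.prod ν).withDensity f).map Prod.fst = μ.withDensity fun x => ∫⁻ y, f (x, y) ∂ν := by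
  ext s hs
  rw [Measure.map_apply measurable_fst hs, withDensity_apply _ (measurable_fst hs),
    withDensity_apply _ hs, ← Set.prod_univ, setLIntegral_prod _ hf.aemeasurable]
  simp only [Measure.restrict_univ]

theorem map_snd_withDensity_prod {α β : Type*} [MeasurableSpace α] [MeasurableSpace β]
    {μ : Measure α} {ν : Measure β} [SFinite μ] [SFinite ν] {f : α × β → ℝ≥0∞}
    (hf : Measurable f) :
    ((μ.prod ν).withDensity f).map Prod.snd = ν.withDensity fun y => ∫⁻ x, f (x, y) ∂μ := by
  ext s hs
  rw [Measure.map_apply measurable_snd hs, withDensity_apply _ (measurable_snd hs),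
    withDensity_apply _ hs, ← Set.univ_prod, setLIntegral_prod_symm _ hf.aemeasurable]
  simp only [Measure.restrict_univ]

theorem W2sq_withDensity_le {d : ℕ}
    {f : (EuclideanSpace ℝ (Fin d) × EuclideanSpace ℝ (Fin d)) ×
      (EuclideanSpace ℝ (Fin d) × EuclideanSpace ℝ (Fin d)) → ℝ≥0∞}
    (hf : Measurable f) (hmass : ∫⁻ Z, f Z = 1) :
    W2sq d (volume.withDensity fun z => ∫⁻ z', f (z, z'))
        (volume.withDensity fun z' => ∫⁻ z, f (z, z')) ≤
      ∫⁻ Z, ENNReal.ofReal (‖Z.1.1 - Z.2.1‖ ^ 2 + ‖Z.1.2 - Z.2.2‖ ^ 2) * f Z := by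
  have hprob : IsProbabilityMeasure (volume.withDensity f) :=
    ⟨by rw [withDensity_apply _ .univ, setLIntegral_univ, hmass]⟩
  refine sInf_le ⟨volume.withDensity f, hprob, map_fst_withDensity_prod hf,
    map_snd_withDensity_prod hf, ?_⟩
  rw [lintegral_withDensity_eq_lintegral_mul _ hf (by fun_prop)]
  simp only [Pi.mul_apply, mul_comm]

end ClassicalCoupling

section CouplingDensity

variable {E F : Type*} [NormedAddCommGroup E] [InnerProductSpace ℝ E] [FiniteDimensional ℝ E]
  [MeasurableSpace E] [BorelSpace E] [NormedAddCommGroup F] [InnerProductSpace ℝ F]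
  [FiniteDimensional ℝ F] [MeasurableSpace F] [BorelSpace F] {ε : ℝ} {lam : ℕ → ℝ}
  {ψ : ℕ → E × F → ℂ}

/-- The Husimi density, on pairs of phase space points, of the operator `∑ λₙ |ψₙ⟩⟨ψₙ|` on a
two-particle space; for a quantum coupling of two density operators it is the density of a
classical coupling of their Husimi transforms. -/
def couplingDensity (ε : ℝ) (lam : ℕ → ℝ) (ψ : ℕ → E × F → ℂ) (Z : (E × E) × (F × F)) : ℝ≥0∞ :=
  ∑' n, ENNReal.ofReal (lam n) * jointHusimi ε (ψ n) Z

theorem measurable_couplingDensity (hψ : ∀ n, Measurable (ψ n)) :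
    Measurable (couplingDensity ε lam ψ) := by
  unfold couplingDensity
  fun_prop

theorem couplingDensity_comp_swap (Z : (E × E) × (F × F)) :
    couplingDensity ε lam (fun n => ψ n ∘ Prod.swap) Z.swap = couplingDensity ε lam ψ Z := by
  simp only [couplingDensity, jointHusimi_comp_swap]

theorem lintegral_mul_couplingDensity (hψ : ∀ n, Measurable (ψ n))
    {c : (E × E) × (F × F) → ℝ≥0∞} (hc : Measurable c) :
    ∫⁻ Z, c Z * couplingDensity ε lam ψ Z =
      ∑' n, ENNReal.ofReal (lam n) * ∫⁻ Z, c Z * jointHusimi ε (ψ n) Z := by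
  simp only [couplingDensity, ← ENNReal.tsum_mul_left, mul_left_comm (c _)]
  rw [lintegral_tsum fun n => by fun_prop]
  exact tsum_congr fun n => lintegral_const_mul _ (by fun_prop)

theorem lintegral_couplingDensity (hε : 0 < ε) (hψ : ∀ n, Measurable (ψ n))
    (hψ2 : ∀ n, MemLp (ψ n) 2) :
    ∫⁻ Z, couplingDensity ε lam ψ Z = ∑' n, ENNReal.ofReal (lam n) * ∫⁻ X, ‖ψ n X‖ₑ ^ 2 := by
  simpa only [Pi.one_apply, one_mul, lintegral_jointHusimi hε (hψ _) (hψ2 _)] using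
    lintegral_mul_couplingDensity (ε := ε) (lam := lam) hψ measurable_one

theorem lintegral_couplingDensity_snd (hε : 0 < ε) (hψ : ∀ n, Measurable (ψ n))
    (hψ2 : ∀ n, MemLp (ψ n) 2) (z : E × E) :
    ∫⁻ z', couplingDensity ε lam ψ (z, z') =
      ∑' n, ENNReal.ofReal (lam n) * ∫⁻ y, pureHusimi ε (fun x => ψ n (x, y)) z := by
  simp only [couplingDensity]
  rw [lintegral_tsum fun n => by fun_prop]
  refine tsum_congr fun n => ?_
  rw [lintegral_const_mul _ (by fun_prop), lintegral_jointHusimi_snd hε (hψ n) (hψ2 n)]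

end CouplingDensity

section HusimiCoupling

variable {d : ℕ} {ε : ℝ} {lam lam' : ℕ → ℝ} {φ : ℕ → EuclideanSpace ℝ (Fin d) → ℂ}
  {ψ : ℕ → EuclideanSpace ℝ (Fin d) × EuclideanSpace ℝ (Fin d) → ℂ}

theorem lintegral_couplingDensity_snd_eq_husimi (hε : 0 < ε) (hlam : ∀ n, 0 ≤ lam n)
    (hlam' : ∀ n, 0 ≤ lam' n) (hφ : ∀ n, Measurable (φ n)) (hψ : ∀ n, Measurable (ψ n))
    (hψ2 : ∀ n, MemLp (ψ n) 2)
    (htrace : ∑' n, ENNReal.ofReal (lam n) * ∫⁻ x, ‖φ n x‖ₑ ^ 2 ≠ ⊤)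
    (htrace' : ∑' n, ENNReal.ofReal (lam' n) * ∫⁻ X, ‖ψ n X‖ₑ ^ 2 ≠ ⊤)
    (hkernel : ∀ x y, ∫ w, kerOf d lam' ψ (x, w) (y, w) = densKernel d lam φ x y)
    (z : EuclideanSpace ℝ (Fin d) × EuclideanSpace ℝ (Fin d)) :
    ∫⁻ z', couplingDensity ε lam' ψ (z, z') = ENNReal.ofReal (husimi d ε lam φ z) := by
  rw [lintegral_couplingDensity_snd hε hψ hψ2,
    ofReal_husimi_eq_of_partialTrace_eq hε hlam hlam' hφ hψ htrace htrace' hkernel]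

theorem lintegral_couplingDensity_fst_eq_husimi (hε : 0 < ε) (hlam : ∀ n, 0 ≤ lam n)
    (hlam' : ∀ n, 0 ≤ lam' n) (hφ : ∀ n, Measurable (φ n)) (hψ : ∀ n, Measurable (ψ n))
    (hψ2 : ∀ n, MemLp (ψ n) 2)
    (htrace : ∑' n, ENNReal.ofReal (lam n) * ∫⁻ x, ‖φ n x‖ₑ ^ 2 ≠ ⊤)
    (htrace' : ∑' n, ENNReal.ofReal (lam' n) * ∫⁻ X, ‖ψ n X‖ₑ ^ 2 ≠ ⊤)
    (hkernel : ∀ x y, ∫ w, kerOf d lam' ψ (w, x) (w, y) = densKernel d lam φ x y)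
    (z' : EuclideanSpace ℝ (Fin d) × EuclideanSpace ℝ (Fin d)) :
    ∫⁻ z, couplingDensity ε lam' ψ (z, z') = ENNReal.ofReal (husimi d ε lam φ z') := by
  have hnorm (n : ℕ) : ∫⁻ X, ‖(ψ n ∘ Prod.swap) X‖ₑ ^ 2 = ∫⁻ X, ‖ψ n X‖ₑ ^ 2 :=
    Measure.measurePreserving_swap.lintegral_comp (f := fun X => ‖ψ n X‖ₑ ^ 2) (by fun_prop)
  simp only [← couplingDensity_comp_swap (_, z'), Prod.swap_prod_mk]
  exact lintegral_couplingDensity_snd_eq_husimi hε hlam hlam' hφ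
    (fun n => (hψ n).comp measurable_swap)
    (fun n => (hψ2 n).comp_measurePreserving Measure.measurePreserving_swap) htrace
    (by simpa only [hnorm]) hkernel z'

theorem lintegral_transportCost_mul_couplingDensity_le (hε : 0 < ε)
    (hψ : ∀ n, Differentiable ℝ (ψ n)) (hψ2 : ∀ n, MemLp (ψ n) 2) :
    ∫⁻ Z, ENNReal.ofReal (‖Z.1.1 - Z.2.1‖ ^ 2 + ‖Z.1.2 - Z.2.2‖ ^ 2) *
        couplingDensity ε lam ψ Z ≤
      (∑' n, ENNReal.ofReal (lam n) * costForm d ε (ψ n)) +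
        ENNReal.ofReal (2 * d * ε) * ∑' n, ENNReal.ofReal (lam n) * ∫⁻ X, ‖ψ n X‖ₑ ^ 2 := by
  rw [lintegral_mul_couplingDensity (fun n => (hψ n).continuous.measurable) (by fun_prop),
    ← ENNReal.tsum_mul_left, ← ENNReal.tsum_add]
  refine ENNReal.tsum_le_tsum fun n => ?_
  rw [mul_left_comm, ← mul_add]
  gcongr
  exact lintegral_transportCost_mul_jointHusimi_le hε (hψ n) (hψ2 n)

end HusimiCoupling

theorem husimi_W2_le_MKeps_general (d : ℕ) (ε : ℝ) (hε : 0 < ε)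
    (lam1 lam2 : ℕ → ℝ) (hlam1 : ∀ n, 0 ≤ lam1 n) (hlam2 : ∀ n, 0 ≤ lam2 n)
    (φ1 φ2 : ℕ → EuclideanSpace ℝ (Fin d) → ℂ)
    (hm1 : ∀ n, Measurable (φ1 n)) (hm2 : ∀ n, Measurable (φ2 n))
    (htrace1 : ∑' n, ENNReal.ofReal (lam1 n) * ∫⁻ x, ‖φ1 n x‖ₑ ^ 2 ≠ ⊤)
    (htrace2 : ∑' n, ENNReal.ofReal (lam2 n) * ∫⁻ x, ‖φ2 n x‖ₑ ^ 2 ≠ ⊤) :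
    W2sq d
        (volume.withDensity fun z => ENNReal.ofReal (husimi d ε lam1 φ1 z))
        (volume.withDensity fun z => ENNReal.ofReal (husimi d ε lam2 φ2 z))
      ≤ MKsq d ε (densKernel d lam1 φ1) (densKernel d lam2 φ2)
          + ENNReal.ofReal (2 * d * ε) := by
  rw [MKsq, ENNReal.sInf_add]
  refine le_iInf₂ fun c ⟨lam, ψ, hlam, hsum, hψ, horth, hkernel1, hkernel2, hc⟩ => ?_
  have hψm (n : ℕ) : Measurable (ψ n) := (hψ n).continuous.measurable
  have hψ2 (n : ℕ) : MemLp (ψ n) 2 :=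
    (memLp_two_iff_lintegral_enorm_sq_ne_top (hψm n).aestronglyMeasurable).2 <|
      (lintegral_enorm_sq_eq_one_of_integral_conj_mul_self (by simp [horth])).trans_ne
        ENNReal.one_ne_top
  have htrace := tsum_mul_lintegral_enorm_sq_eq_one hlam hsum horth
  have hmass := (lintegral_couplingDensity (lam := lam) hε hψm hψ2).trans htrace
  have hcoupling := W2sq_withDensity_le (measurable_couplingDensity hψm) hmass
  have hcost := lintegral_transportCost_mul_couplingDensity_le (lam := lam) hε
    (fun n => (hψ n).differentiable one_ne_zero) hψ2
  have hfin := htrace.trans_ne ENNReal.one_ne_top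
  simp only [htrace, mul_one, ← hc] at hcost
  simp only [
    lintegral_couplingDensity_snd_eq_husimi hε hlam1 hlam hm1 hψm hψ2 htrace1 hfin hkernel1,
    lintegral_couplingDensity_fst_eq_husimi hε hlam2 hlam hm2 hψm hψ2 htrace2 hfin hkernel2]
    at hcoupling
  exact hcoupling.trans hcost

/-- Theorem 2.3 (2), first inequality: for density operators `ρ₁^ε, ρ₂^ε` on
`L²(ℝ^d)` with Husimi transforms `W̃_ε[ρ₁^ε], W̃_ε[ρ₂^ε]`, one has
`MK₂^ε(ρ₁^ε,ρ₂^ε)² ≥ dist_{MK,2}(W̃_ε[ρ₁^ε], W̃_ε[ρ₂^ε])² − 2dε`,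
stated here in the equivalent subtraction-free form
`dist_{MK,2}(W̃_ε[ρ₁^ε], W̃_ε[ρ₂^ε])² ≤ MK₂^ε(ρ₁^ε,ρ₂^ε)² + 2dε`. -/
theorem husimi_W2_le_MKeps (d : ℕ) (ε : ℝ) (hε : 0 < ε)
    (lam1 lam2 : ℕ → ℝ) (hlam1 : ∀ n, 0 ≤ lam1 n) (hlam2 : ∀ n, 0 ≤ lam2 n)
    (hsum1 : ∑' n, lam1 n = 1) (hsum2 : ∑' n, lam2 n = 1)
    (φ1 φ2 : ℕ → EuclideanSpace ℝ (Fin d) → ℂ)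
    (hm1 : ∀ n, Measurable (φ1 n)) (hm2 : ∀ n, Measurable (φ2 n))
    (horth1 : ∀ m n, ∫ x, conj (φ1 m x) * φ1 n x = if m = n then 1 else 0)
    (horth2 : ∀ m n, ∫ x, conj (φ2 m x) * φ2 n x = if m = n then 1 else 0) :
    W2sq d
        (volume.withDensity fun z => ENNReal.ofReal (husimi d ε lam1 φ1 z))
        (volume.withDensity fun z => ENNReal.ofReal (husimi d ε lam2 φ2 z))
      ≤ MKsq d ε (densKernel d lam1 φ1) (densKernel d lam2 φ2)
          + ENNReal.ofReal (2 * d * ε) := by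
  have htrace1 := tsum_mul_lintegral_enorm_sq_eq_one hlam1 hsum1 horth1
  have htrace2 := tsum_mul_lintegral_enorm_sq_eq_one hlam2 hsum2 horth2
  exact husimi_W2_le_MKeps_general d ε hε lam1 lam2 hlam1 hlam2 φ1 φ2 hm1 hm2
    (htrace1.trans_ne ENNReal.one_ne_top) (htrace2.trans_ne ENNReal.one_ne_top)

end
end
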